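/- arXiv:2409.14994 — 3 statements merged into one kernel-verified Lean document; each statement's English description precedes it below -/
import Mathlib

section
/- Let m ∈ ℂ ∖ ℤ with Re(m) > −1 and k ∈ ℂ with Re(k) > 0, and define the Bessel resolvent kernel G(x,y) := (1/k)·𝓘_m(k·min(x,y))·𝓚_m(k·max(x,y)) for x, y > 0. Then the corresponding integral operator is bounded on L²(]0,∞[): there exists C ≥ 0 such that for all square-integrable f, g : ]0,∞[ → ℂ one has ∫_0^∞ ∫_0^∞ |f(x)|·|G(x,y)|·|g(y)| dx dy ≤ C·‖f‖_{L²}·‖g‖_{L²}. -/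
open Complex Set MeasureTheory

/-- Olver-normalized hypergeometric function `₀𝐅₁(c; w) = ∑ wⁿ/(n! Γ(c+n))`. -/
noncomputable def zeroF1reg (c w : ℂ) : ℂ :=
  ∑' n : ℕ, w ^ n / ((n.factorial : ℂ) * Complex.Gamma (c + n))

/-- Hyperbolic 1d Bessel function `𝓘_m(z) = √π (z/2)^{1/2+m} ₀𝐅₁(m+1; z²/4)`
(principal branch powers). -/
noncomputable def besselI1d (m z : ℂ) : ℂ :=
  (Real.sqrt Real.pi : ℂ) * (z / 2) ^ ((1 : ℂ) / 2 + m) * zeroF1reg (m + 1) (z ^ 2 / 4)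

/-- 1d Macdonald function `𝓚_m(z) = (𝓘_{-m}(z) - 𝓘_m(z))/sin(π m)` for `m ∉ ℤ`. -/
noncomputable def macdonaldK1d (m z : ℂ) : ℂ :=
  (besselI1d (-m) z - besselI1d m z) / Complex.sin (Real.pi * m)

/-!
A Schur test with weight `(min x 1) ^ δ`, where `δ = 1/2 + min (Re m) 0 > -1/2`: it suffices that
`‖G x y‖ ≤ C (min x 1) ^ δ * exp (-(Re k) |x - y|) * (min y 1) ^ δ`.

Near `0` this is read off the power series. At infinity, `𝓘_m` and `𝓘_{m+1}` satisfy a first-order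
linear system for which `exp (c / x - 2 (Re k) x) (|𝓘_m|² + |𝓘_{m+1}|²)` decreases along the ray
`k ℝ₊`, and the decay of `𝓚_m` follows from its integral representation
`√(z / 2π) ∫ exp (-z cosh u - m u) du`. The latter is proved by uniqueness: both sides obey the same
differential recurrences in the order `m` and have the same leading behaviour at `0`.
-/

open Filter Topology
open scoped ENNReal

section ZeroF1

lemma exists_norm_inv_Gamma_add_nat_le (c : ℂ) :
    ∃ B : ℝ, ∀ n : ℕ, ‖(Complex.Gamma (c + n))⁻¹‖ ≤ B := by
  set a : ℕ → ℝ := fun n => ‖(Complex.Gamma (c + n))⁻¹‖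
  obtain ⟨N, hN⟩ := exists_nat_ge (‖c‖ + 1)
  have h_succ : ∀ n, N ≤ n → a (n + 1) ≤ a n := by
    intro n hn
    have h_one_le : 1 ≤ ‖c + n‖ := by
      have h_tri : ‖(n : ℂ)‖ - ‖c‖ ≤ ‖c + n‖ := by
        simpa only [norm_neg, sub_neg_eq_add, add_comm] using norm_sub_norm_le (n : ℂ) (-c)
      have hNn : (N : ℝ) ≤ n := by exact_mod_cast hn
      rw [Complex.norm_natCast] at h_tri
      linarith
    simp only [a, Complex.one_div_Gamma_eq_self_mul_one_div_Gamma_add_one (c + n), norm_mul,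
      Nat.cast_succ, ← add_assoc]
    exact le_mul_of_one_le_left (norm_nonneg _) h_one_le
  have h_bound : ∀ᶠ n in atTop, a n ≤ a N := by
    filter_upwards [eventually_ge_atTop N] with n hn
    induction n, hn using Nat.le_induction with
    | base => exact le_rfl
    | succ n hn ih => exact (h_succ n hn).trans ih
  obtain ⟨B, hB⟩ := (isBoundedUnder_of_eventually_le h_bound).bddAbove_range
  exact ⟨B, fun n => hB (mem_range_self n)⟩

lemma hasSum_zeroF1reg (c w : ℂ) :
    HasSum (fun n : ℕ => w ^ n / ((n.factorial : ℂ) * Complex.Gamma (c + n))) (zeroF1reg c w) := by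
  obtain ⟨B, hB⟩ := exists_norm_inv_Gamma_add_nat_le c
  refine Summable.hasSum <|
    ((Real.summable_pow_div_factorial ‖w‖).mul_right B).of_norm_bounded fun n => ?_
  rw [← div_div, div_eq_mul_inv _ (Complex.Gamma _), norm_mul, norm_div, norm_pow,
    Complex.norm_natCast]
  gcongr
  exact hB n

lemma zeroF1reg_zero (c : ℂ) : zeroF1reg c 0 = (Complex.Gamma c)⁻¹ := by
  rw [zeroF1reg, tsum_eq_single 0 fun n hn => by simp [hn]]
  simp

lemma succ_mul_pow_div_factorial_mul_Gamma (c w : ℂ) (n : ℕ) :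
    ((n + 1 : ℕ) : ℂ) * w ^ n / (((n + 1).factorial : ℂ) * Complex.Gamma (c + (n + 1 : ℕ)))
      = w ^ n / ((n.factorial : ℂ) * Complex.Gamma (c + 1 + n)) := by
  have h_ne : ((n + 1 : ℕ) : ℂ) ≠ 0 := Nat.cast_ne_zero.2 n.succ_ne_zero
  rw [show c + ((n + 1 : ℕ) : ℂ) = c + 1 + n by push_cast; ring, Nat.factorial_succ,
    Nat.cast_mul, mul_assoc, mul_div_mul_left _ _ h_ne]

lemma hasSum_nat_mul_zeroF1reg (c w : ℂ) :
    HasSum (fun n : ℕ => (n : ℂ) * w ^ (n - 1) / ((n.factorial : ℂ) * Complex.Gamma (c + n)))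
      (zeroF1reg (c + 1) w) := by
  rw [← hasSum_nat_add_iff' 1]
  simpa [succ_mul_pow_div_factorial_mul_Gamma, -Nat.cast_add] using hasSum_zeroF1reg (c + 1) w

lemma hasDerivAt_zeroF1reg (c w : ℂ) : HasDerivAt (zeroF1reg c) (zeroF1reg (c + 1) w) w := by
  obtain ⟨B, hB⟩ := exists_norm_inv_Gamma_add_nat_le c
  set R : ℝ := ‖w‖ + 1
  have h_summable : Summable fun n : ℕ => n * R ^ (n - 1) / n.factorial * B := by
    refine Summable.mul_right B ((summable_nat_add_iff 1).1 ?_)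
    refine (Real.summable_pow_div_factorial R).congr fun n => ?_
    rw [Nat.factorial_succ, Nat.cast_mul, Nat.add_sub_cancel, mul_div_mul_left _ _ (by positivity)]
  rw [← (hasSum_nat_mul_zeroF1reg c w).tsum_eq]
  refine hasDerivAt_tsum_of_isPreconnected (t := Metric.ball (0 : ℂ) R) (y₀ := w)
    (g := fun (n : ℕ) (z : ℂ) => z ^ n / ((n.factorial : ℂ) * Complex.Gamma (c + n)))
    (g' := fun (n : ℕ) (z : ℂ) =>
      (n : ℂ) * z ^ (n - 1) / ((n.factorial : ℂ) * Complex.Gamma (c + n)))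
    h_summable Metric.isOpen_ball (convex_ball _ _).isPreconnected
    (fun n z _ => (hasDerivAt_pow n z).div_const _) (fun n z hz => ?_) (by simp [R])
    (hasSum_zeroF1reg c w).summable (by simp [R])
  have hzR : ‖z‖ ≤ R := (mem_ball_zero_iff.1 hz).le
  rw [← div_div, div_eq_mul_inv _ (Complex.Gamma _), norm_mul, norm_div, norm_mul, norm_pow,
    Complex.norm_natCast, Complex.norm_natCast]
  gcongr
  exact hB n

lemma continuous_zeroF1reg (c : ℂ) : Continuous (zeroF1reg c) :=
  continuous_iff_continuousAt.2 fun w => (hasDerivAt_zeroF1reg c w).continuousAt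

lemma zeroF1reg_eq_mul_add_mul (c w : ℂ) :
    zeroF1reg c w = c * zeroF1reg (c + 1) w + w * zeroF1reg (c + 2) w := by
  have h_sum := ((hasSum_zeroF1reg (c + 1) w).mul_left c).add
    ((hasSum_nat_mul_zeroF1reg (c + 1) w).mul_left w)
  rw [show c + 1 + 1 = c + 2 by ring] at h_sum
  rw [← h_sum.tsum_eq, zeroF1reg]
  refine tsum_congr fun n => ?_
  have h_Gamma := Complex.one_div_Gamma_eq_self_mul_one_div_Gamma_add_one (c + n)
  have h_pow : (n : ℂ) * w ^ n = n * (w * w ^ (n - 1)) := by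
    cases n with
    | zero => simp
    | succ n => rw [Nat.add_sub_cancel, pow_succ']
  rw [← div_div, div_eq_mul_inv, h_Gamma, show c + 1 + (n : ℂ) = c + n + 1 by ring]
  linear_combination (n.factorial : ℂ)⁻¹ * (Complex.Gamma (c + n + 1))⁻¹ * h_pow

end ZeroF1

section BesselI

variable {z : ℂ}

lemma div_two_mem_slitPlane (hz : 0 < z.re) : z / 2 ∈ slitPlane := by
  refine Or.inl ?_
  rw [show (2 : ℂ) = (2 : ℝ) by norm_num, Complex.div_ofReal_re]
  positivity

lemma besselI1d_add_one (m : ℂ) (hz : z ≠ 0) :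
    besselI1d (m + 1) z =
      (Real.sqrt Real.pi : ℂ) * ((z / 2) ^ ((1 : ℂ) / 2 + m) * (z / 2)) *
        zeroF1reg (m + 2) (z ^ 2 / 4) := by
  rw [besselI1d, ← add_assoc, Complex.cpow_add _ _ (div_ne_zero hz two_ne_zero), Complex.cpow_one,
    show m + 1 + 1 = m + 2 by ring]

lemma hasDerivAt_besselI1d_add_one (m : ℂ) (hz : 0 < z.re) :
    HasDerivAt (besselI1d m) ((1 / 2 + m) / z * besselI1d m z + besselI1d (m + 1) z) z := by
  have hz₀ : z ≠ 0 := ne_zero_of_re_pos hz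
  have h_pow : HasDerivAt (fun w : ℂ => (w / 2) ^ ((1 : ℂ) / 2 + m))
      ((1 / 2 + m) * (z / 2) ^ ((1 : ℂ) / 2 + m - 1) * (1 / 2)) z :=
    ((hasDerivAt_id z).div_const 2).cpow_const (div_two_mem_slitPlane hz)
  have h_series : HasDerivAt (fun w : ℂ => zeroF1reg (m + 1) (w ^ 2 / 4))
      (zeroF1reg (m + 2) (z ^ 2 / 4) * (z / 2)) z := by
    have h := (hasDerivAt_zeroF1reg (m + 1) (z ^ 2 / 4)).comp z
      ((hasDerivAt_pow 2 z).div_const 4)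
    refine h.congr_deriv ?_
    rw [show m + 1 + 1 = m + 2 by ring]
    push_cast
    ring
  refine ((h_pow.const_mul _).mul h_series).congr_deriv ?_
  rw [besselI1d_add_one m hz₀, besselI1d, Complex.cpow_sub _ _ (div_ne_zero hz₀ two_ne_zero),
    Complex.cpow_one]
  field_simp

lemma two_mul_besselI1d (m : ℂ) (hz : z ≠ 0) :
    2 * m * besselI1d m z = z * (besselI1d (m - 1) z - besselI1d (m + 1) z) := by
  have h_series := zeroF1reg_eq_mul_add_mul m (z ^ 2 / 4)
  have hm := besselI1d_add_one (m - 1) hz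
  have hm_succ := besselI1d_add_one m hz
  rw [show (1 : ℂ) / 2 + m = 1 / 2 + (m - 1) + 1 by ring,
    Complex.cpow_add _ _ (div_ne_zero hz two_ne_zero), Complex.cpow_one] at hm_succ
  rw [sub_add_cancel, show m - 1 + 2 = m + 1 by ring] at hm
  rw [hm, hm_succ, besselI1d, sub_add_cancel, h_series]
  ring

lemma hasDerivAt_besselI1d_sub_one (m : ℂ) (hz : 0 < z.re) :
    HasDerivAt (besselI1d m) ((1 / 2 - m) / z * besselI1d m z + besselI1d (m - 1) z) z := by
  have hz₀ := ne_zero_of_re_pos hz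
  refine (hasDerivAt_besselI1d_add_one m hz).congr_deriv ?_
  field_simp
  linear_combination 2 * two_mul_besselI1d m hz₀

end BesselI

/-- Families of functions on the right half-plane, indexed by the order `m`, that obey the
differential recurrences of the 1d Macdonald functions. Both `macdonaldK1d` and its integral
representation are such families. -/
structure IsMacdonaldFamily (X : ℂ → ℂ → ℂ) : Prop where
  neg (m z : ℂ) : X (-m) z = X m z
  hasDerivAt (m : ℂ) {z : ℂ} (hz : 0 < z.re) :
    HasDerivAt (X m) ((1 / 2 - m) / z * X m z - X (m - 1) z) z
  recurrence (m : ℂ) {z : ℂ} (hz : 0 < z.re) : 2 * m * X m z = z * (X (m + 1) z - X (m - 1) z)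

theorem isMacdonaldFamily_macdonaldK1d : IsMacdonaldFamily macdonaldK1d where
  neg m z := by
    rw [macdonaldK1d, macdonaldK1d, neg_neg, mul_neg, Complex.sin_neg, div_neg, ← neg_div, neg_sub]
  hasDerivAt m z hz := by
    have h := ((hasDerivAt_besselI1d_add_one (-m) hz).sub
      (hasDerivAt_besselI1d_sub_one m hz)).div_const (Complex.sin (Real.pi * m))
    refine h.congr_deriv ?_
    rw [macdonaldK1d, macdonaldK1d, mul_sub_one, Complex.sin_sub_pi, neg_sub',
      sub_neg_eq_add, div_neg]
    ring
  recurrence m z hz := by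
    have hz₀ := ne_zero_of_re_pos hz
    have h_neg := two_mul_besselI1d (-m) hz₀
    have h_pos := two_mul_besselI1d m hz₀
    rw [macdonaldK1d, macdonaldK1d, macdonaldK1d, mul_add_one, mul_sub_one, Complex.sin_sub_pi,
      Complex.sin_add_pi, neg_sub', sub_neg_eq_add, neg_add', div_neg, div_neg]
    linear_combination (-h_neg - h_pos) / Complex.sin (Real.pi * m)

namespace IsMacdonaldFamily

variable {X Y : ℂ → ℂ → ℂ}

lemma sub (hX : IsMacdonaldFamily X) (hY : IsMacdonaldFamily Y) :
    IsMacdonaldFamily fun m z => X m z - Y m z where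
  neg m z := by rw [hX.neg, hY.neg]
  hasDerivAt m z hz := ((hX.hasDerivAt m hz).sub (hY.hasDerivAt m hz)).congr_deriv (by ring)
  recurrence m z hz := by linear_combination hX.recurrence m hz - hY.recurrence m hz

end IsMacdonaldFamily

section ODE

lemma eq_zero_of_norm_deriv_le_of_tendsto_zero {E : Type*} [NormedAddCommGroup E]
    [NormedSpace ℝ E] {y y' : ℝ → E} {K a b : ℝ} (hab : a < b)
    (h_deriv : ∀ x ∈ Ioc a b, HasDerivAt y (y' x) x)
    (h_le : ∀ x ∈ Ioc a b, ‖y' x‖ ≤ K * ‖y x‖) (h_lim : Tendsto y (𝓝[>] a) (𝓝 0)) :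
    y b = 0 := by
  have h_gronwall : ∀ᶠ ε in 𝓝[>] a, ‖y b‖ ≤ ‖y ε‖ * Real.exp (K * (b - ε)) := by
    filter_upwards [Ioo_mem_nhdsGT hab] with ε ⟨haε, hεb⟩
    have h_sub : Icc ε b ⊆ Ioc a b := Icc_subset_Ioc haε le_rfl
    have h := norm_le_gronwallBound_of_norm_deriv_right_le (f := y) (f' := y') (δ := ‖y ε‖)
      (K := K) (ε := 0) (fun x hx => (h_deriv x (h_sub hx)).continuousAt.continuousWithinAt)
      (fun x hx => (h_deriv x (h_sub (Ico_subset_Icc_self hx))).hasDerivWithinAt) le_rfl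
      (fun x hx => by simpa using h_le x (h_sub (Ico_subset_Icc_self hx))) b
      (right_mem_Icc.2 hεb.le)
    rwa [gronwallBound_ε0] at h
  have h_exp : Tendsto (fun ε => Real.exp (K * (b - ε))) (𝓝[>] a) (𝓝 (Real.exp (K * (b - a)))) :=
    Tendsto.mono_left (Continuous.tendsto (by fun_prop) a) nhdsWithin_le_nhds
  have h_zero := h_lim.norm.mul h_exp
  rw [norm_zero, zero_mul] at h_zero
  exact norm_le_zero_iff.1 (ge_of_tendsto h_zero h_gronwall)

end ODE

lemma hasDerivAt_ofReal_cpow {c : ℂ} {x : ℝ} (hx : 0 < x) :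
    HasDerivAt (fun t : ℝ => (t : ℂ) ^ c) (c / x * (x : ℂ) ^ c) x := by
  have hx₀ : (x : ℂ) ≠ 0 := ofReal_ne_zero.2 hx.ne'
  have h := ((hasDerivAt_id (x : ℂ)).cpow_const (c := c) (Or.inl hx)).comp_ofReal
  refine h.congr_deriv ?_
  simp only [id_eq, mul_one, Complex.cpow_sub _ _ hx₀, Complex.cpow_one]
  ring

lemma neg_mem_integerComplement {m : ℂ} (hm : m ∈ integerComplement) :
    -m ∈ integerComplement := by
  rintro ⟨n, hn⟩
  exact hm ⟨-n, by push_cast; rw [hn, neg_neg]⟩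

namespace IsMacdonaldFamily

variable {X Y : ℂ → ℂ → ℂ} {m : ℂ}

lemma hasDerivAt_cpow_mul (hX : IsMacdonaldFamily X) (m : ℂ) {x : ℝ} (hx : 0 < x) :
    HasDerivAt (fun t : ℝ => (t : ℂ) ^ (m - 1 / 2) * X m t)
      (-((x : ℂ) ^ (m - 1 / 2) * X (m - 1) x)) x := by
  refine ((hasDerivAt_ofReal_cpow hx).mul
    (hX.hasDerivAt m (z := x) hx).comp_ofReal).congr_deriv ?_
  ring

lemma hasDerivAt_cpow_mul_add_one (hX : IsMacdonaldFamily X) (hm : m ≠ 0) {x : ℝ} (hx : 0 < x) :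
    HasDerivAt (fun t : ℝ => (t : ℂ) ^ (m + 1 / 2) * X (m + 1) t)
      ((2 * m)⁻¹ * ((x : ℂ) ^ (2 * m + 1) * ((x : ℂ) ^ (-m + 1 / 2) * X (-m + 1) x) -
        x * ((x : ℂ) ^ (m + 1 / 2) * X (m + 1) x))) x := by
  have hx₀ : (x : ℂ) ≠ 0 := ofReal_ne_zero.2 hx.ne'
  have h := hX.hasDerivAt_cpow_mul (m + 1) hx
  rw [show m + 1 - 1 / 2 = m + 1 / 2 by ring, add_sub_cancel_right] at h
  refine h.congr_deriv ?_
  have h_rec := hX.recurrence m (z := x) hx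
  rw [← hX.neg (m - 1), neg_sub', sub_neg_eq_add] at h_rec
  have h_cpow : (x : ℂ) ^ (2 * m + 1) * (x : ℂ) ^ (-m + 1 / 2) = (x : ℂ) ^ (m + 1 / 2) * x := by
    rw [← Complex.cpow_add _ _ hx₀, show 2 * m + 1 + (-m + 1 / 2) = m + 1 / 2 + 1 by ring,
      Complex.cpow_add (m + 1 / 2) 1 hx₀, Complex.cpow_one]
  rw [← mul_assoc ((x : ℂ) ^ (2 * m + 1)), h_cpow]
  linear_combination (norm := (field_simp; ring))
    -(2 * m)⁻¹ * (x : ℂ) ^ (m + 1 / 2) * h_rec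

lemma norm_deriv_cpow_mul_add_one_le (hm : -(1 / 2) ≤ m.re) {x : ℝ} (hx : x ∈ Ioc (0 : ℝ) 1)
    (p r : ℂ) :
    ‖(2 * m)⁻¹ * ((x : ℂ) ^ (2 * m + 1) * r - x * p)‖ ≤ ‖m‖⁻¹ * max ‖p‖ ‖r‖ := by
  have h_re : 0 ≤ (2 * m + 1).re := by
    simp
    linarith
  have h_cpow : ‖(x : ℂ) ^ (2 * m + 1)‖ ≤ 1 := by
    rw [Complex.norm_cpow_eq_rpow_re_of_pos hx.1]
    exact Real.rpow_le_one hx.1.le hx.2 h_re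
  have h_x : ‖(x : ℂ)‖ ≤ 1 := by simpa [abs_of_pos hx.1] using hx.2
  calc ‖(2 * m)⁻¹ * ((x : ℂ) ^ (2 * m + 1) * r - x * p)‖
      ≤ ‖(2 * m)⁻¹‖ * (‖(x : ℂ) ^ (2 * m + 1)‖ * ‖r‖ + ‖(x : ℂ)‖ * ‖p‖) := by
        rw [norm_mul, ← norm_mul _ r, ← norm_mul _ p]
        gcongr
        exact norm_sub_le _ _
    _ ≤ ‖(2 * m)⁻¹‖ * (1 * max ‖p‖ ‖r‖ + 1 * max ‖p‖ ‖r‖) := by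
        gcongr
        exacts [le_max_right _ _, le_max_left _ _]
    _ = ‖m‖⁻¹ * max ‖p‖ ‖r‖ := by
        rw [norm_inv, norm_mul, Complex.norm_ofNat]
        ring

lemma add_one_eq_zero_of_tendsto_zero (hX : IsMacdonaldFamily X) (hm : m ≠ 0)
    (hm_re : |m.re| ≤ 1 / 2)
    (h_pos : Tendsto (fun x : ℝ => (x : ℂ) ^ (m + 1 / 2) * X (m + 1) x) (𝓝[>] 0) (𝓝 0))
    (h_neg : Tendsto (fun x : ℝ => (x : ℂ) ^ (-m + 1 / 2) * X (-m + 1) x) (𝓝[>] 0) (𝓝 0))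
    {x : ℝ} (hx : x ∈ Ioc (0 : ℝ) 1) : X (m + 1) x = 0 ∧ X (-m + 1) x = 0 := by
  obtain ⟨h_re_ge, h_re_le⟩ := abs_le.1 hm_re
  have h_deriv : ∀ t ∈ Ioc 0 x, _ := fun t ht =>
    (hX.hasDerivAt_cpow_mul_add_one hm ht.1).prodMk
      (hX.hasDerivAt_cpow_mul_add_one (neg_ne_zero.2 hm) ht.1)
  simp only [neg_neg] at h_deriv
  have h_pair := eq_zero_of_norm_deriv_le_of_tendsto_zero hx.1 h_deriv
    (K := ‖m‖⁻¹) (fun t ht => ?_) (h_pos.prodMk_nhds h_neg)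
  · have hx₀ : (x : ℂ) ≠ 0 := ofReal_ne_zero.2 hx.1.ne'
    simpa [Complex.cpow_eq_zero_iff, hx₀] using h_pair
  · have ht' : t ∈ Ioc (0 : ℝ) 1 := ⟨ht.1, ht.2.trans hx.2⟩
    refine max_le (norm_deriv_cpow_mul_add_one_le h_re_ge ht' _ _) ?_
    rw [Prod.norm_def, max_comm, ← norm_neg m]
    exact norm_deriv_cpow_mul_add_one_le (by simpa using h_re_le) ht' _ _

lemma add_intCast_eq_zero (hX : IsMacdonaldFamily X) {z : ℂ} (hz : 0 < z.re) (h : X m z = 0)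
    (h_succ : X (m + 1) z = 0) (n : ℤ) : X (m + n) z = 0 := by
  have hz₀ := ne_zero_of_re_pos hz
  suffices X (m + n) z = 0 ∧ X (m + n + 1) z = 0 from this.1
  induction n using Int.induction_on with
  | zero => simp [h, h_succ]
  | succ n ih =>
    have h_rec := hX.recurrence (m + n + 1) hz
    push_cast at ih ⊢
    rw [ih.2, add_sub_cancel_right, ih.1, mul_zero, sub_zero, eq_comm, mul_eq_zero] at h_rec
    exact ⟨by rw [← add_assoc]; exact ih.2, by rw [← add_assoc]; exact h_rec.resolve_left hz₀⟩
  | pred n ih =>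
    have h_rec := hX.recurrence (m + (-n : ℤ)) hz
    rw [ih.1, ih.2, mul_zero, zero_sub, eq_comm, mul_eq_zero, neg_eq_zero] at h_rec
    push_cast at ih h_rec ⊢
    rw [← add_sub_assoc, sub_add_cancel]
    exact ⟨h_rec.resolve_left hz₀, ih.1⟩

lemma eq_zero_of_tendsto_zero (hX : IsMacdonaldFamily X)
    (h_lim : ∀ μ ∈ integerComplement, 0 < μ.re →
      Tendsto (fun x : ℝ => (x : ℂ) ^ (μ - 1 / 2) * X μ x) (𝓝[>] 0) (𝓝 0))
    (hm : m ∈ integerComplement) {x : ℝ} (hx : x ∈ Ioc (0 : ℝ) 1) : X m x = 0 := by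
  set n := round m.re
  set μ := m - n
  have hμ : μ ∈ integerComplement := by
    have h := (add_intCast_mem_integerComplement (-n)).2 hm
    rwa [Int.cast_neg, ← sub_eq_add_neg] at h
  have hμ_re : |μ.re| ≤ 1 / 2 := by simpa [μ, n] using abs_sub_round m.re
  have h_lim_succ : ∀ ν ∈ integerComplement, -1 < ν.re →
      Tendsto (fun x : ℝ => (x : ℂ) ^ (ν + 1 / 2) * X (ν + 1) x) (𝓝[>] 0) (𝓝 0) := by
    intro ν hν hν_re
    have h := h_lim (ν + 1) (by exact_mod_cast (add_intCast_mem_integerComplement 1).2 hν)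
      (by simpa using by linarith)
    rwa [show ν + 1 - 1 / 2 = ν + 1 / 2 by ring] at h
  obtain ⟨h_re_ge, h_re_le⟩ := abs_le.1 hμ_re
  obtain ⟨h_pos, h_neg⟩ := hX.add_one_eq_zero_of_tendsto_zero (integerComplement.ne_zero hμ)
    hμ_re (h_lim_succ μ hμ (by linarith))
    (h_lim_succ (-μ) (neg_mem_integerComplement hμ) (by rw [neg_re]; linarith)) hx
  have h_zero : X μ x = 0 := by
    have h_rec := hX.recurrence μ (z := x) hx.1
    rw [← hX.neg (μ - 1), neg_sub', sub_neg_eq_add, h_pos, h_neg, sub_zero, mul_zero] at h_rec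
    simpa [integerComplement.ne_zero hμ] using h_rec
  simpa [μ] using hX.add_intCast_eq_zero (z := x) hx.1 h_zero h_pos n

theorem eq_of_tendsto (hX : IsMacdonaldFamily X) (hY : IsMacdonaldFamily Y)
    (h_lim : ∀ μ ∈ integerComplement, 0 < μ.re →
      Tendsto (fun x : ℝ => (x : ℂ) ^ (μ - 1 / 2) * (X μ x - Y μ x)) (𝓝[>] 0) (𝓝 0))
    (hm : m ∈ integerComplement) {z : ℂ} (hz : 0 < z.re) : X m z = Y m z := by
  have h_analytic : ∀ {Z : ℂ → ℂ → ℂ}, IsMacdonaldFamily Z →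
      AnalyticOnNhd ℂ (Z m) {w : ℂ | 0 < w.re} := fun hZ =>
    DifferentiableOn.analyticOnNhd
      (fun w hw => (hZ.hasDerivAt m hw).differentiableAt.differentiableWithinAt)
      (isOpen_lt continuous_const continuous_re)
  refine (h_analytic hX).eqOn_of_preconnected_of_frequently_eq (h_analytic hY)
    (convex_halfSpace_re_gt 0).isPreconnected (z₀ := 1) (by simp) ?_ hz
  have h_ofReal : Tendsto (fun x : ℝ => (x : ℂ)) (𝓝[<] 1) (𝓝[≠] 1) :=
    continuous_ofReal.continuousWithinAt.tendsto_nhdsWithin fun x hx => by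
      simpa using (mem_Iio.1 hx).ne
  refine h_ofReal.frequently (Eventually.frequently ?_)
  filter_upwards [Ioo_mem_nhdsLT zero_lt_one] with x hx
  exact sub_eq_zero.1 ((hX.sub hY).eq_zero_of_tendsto_zero h_lim hm (Ioo_subset_Ioc_self hx))

end IsMacdonaldFamily

section BesselIAtZero

lemma mul_ofReal_cpow {z : ℂ} (hz : z ≠ 0) {x : ℝ} (hx : 0 < x) (c : ℂ) :
    (z * x) ^ c = z ^ c * (x : ℂ) ^ c := by
  have hx₀ : (x : ℂ) ≠ 0 := ofReal_ne_zero.2 hx.ne'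
  rw [mul_comm z, Complex.cpow_def_of_ne_zero (mul_ne_zero hx₀ hz),
    Complex.cpow_def_of_ne_zero hz, Complex.cpow_def_of_ne_zero hx₀, Complex.log_ofReal_mul hx hz,
    Complex.ofReal_log hx.le, add_mul, Complex.exp_add, mul_comm]

lemma besselI1d_mul_ofReal (m : ℂ) {k : ℂ} (hk : k ≠ 0) {x : ℝ} (hx : 0 < x) :
    besselI1d m (k * x) =
      (x : ℂ) ^ (1 / 2 + m) *
        (Real.sqrt Real.pi * (k / 2) ^ (1 / 2 + m) * zeroF1reg (m + 1) ((k * x) ^ 2 / 4)) := by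
  rw [besselI1d, mul_div_right_comm, mul_ofReal_cpow (div_ne_zero hk two_ne_zero) hx]
  ring

lemma tendsto_cpow_mul_besselI1d (m : ℂ) :
    Tendsto (fun x : ℝ => (x : ℂ) ^ (-m - 1 / 2) * besselI1d m x) (𝓝[>] 0)
      (𝓝 (Real.sqrt Real.pi * (1 / 2) ^ (1 / 2 + m) * (Complex.Gamma (m + 1))⁻¹)) := by
  have h_cont : Continuous fun x : ℝ => (Real.sqrt Real.pi : ℂ) * (1 / 2) ^ (1 / 2 + m) *
      zeroF1reg (m + 1) ((1 * (x : ℂ)) ^ 2 / 4) :=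
    continuous_const.mul ((continuous_zeroF1reg _).comp (by fun_prop))
  have h_tendsto := (h_cont.tendsto 0).mono_left (nhdsWithin_le_nhds (s := Ioi 0))
  simp only [ofReal_zero, mul_zero, ne_eq, OfNat.ofNat_ne_zero, not_false_eq_true, zero_pow,
    zero_div, zeroF1reg_zero] at h_tendsto
  refine h_tendsto.congr' ?_
  filter_upwards [self_mem_nhdsWithin] with x (hx : 0 < x)
  have h := besselI1d_mul_ofReal m one_ne_zero hx
  rw [one_mul] at h ⊢
  rw [h, ← mul_assoc, ← Complex.cpow_add _ _ (ofReal_ne_zero.2 hx.ne'),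
    show -m - 1 / 2 + (1 / 2 + m) = 0 by ring, Complex.cpow_zero, one_mul]

lemma tendsto_ofReal_cpow_zero {c : ℂ} (hc : 0 < c.re) :
    Tendsto (fun x : ℝ => (x : ℂ) ^ c) (𝓝[>] 0) (𝓝 0) := by
  have h := (Complex.continuousAt_ofReal_cpow_const 0 c (Or.inl hc)).tendsto
  rw [ofReal_zero, Complex.zero_cpow (ne_zero_of_re_pos hc)] at h
  exact h.mono_left nhdsWithin_le_nhds

lemma inv_Gamma_one_sub_div_sin {m : ℂ} (hm : m ∈ integerComplement) :
    (Complex.Gamma (1 - m))⁻¹ / Complex.sin (Real.pi * m) = Complex.Gamma m / Real.pi := by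
  have h_sin : Complex.sin (Real.pi * m) ≠ 0 := sin_pi_mul_ne_zero hm
  have h_pi : (Real.pi : ℂ) ≠ 0 := ofReal_ne_zero.2 Real.pi_ne_zero
  have h_reflection := Complex.Gamma_mul_Gamma_one_sub m
  have h_Gamma : Complex.Gamma (1 - m) ≠ 0 :=
    right_ne_zero_of_mul (h_reflection ▸ div_ne_zero h_pi h_sin)
  rw [eq_div_iff h_sin] at h_reflection
  rw [inv_eq_one_div, div_div, div_eq_div_iff (mul_ne_zero h_Gamma h_sin) h_pi]
  linear_combination -h_reflection

theorem tendsto_cpow_mul_macdonaldK1d {m : ℂ} (hm : m ∈ integerComplement) (hm_re : 0 < m.re) :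
    Tendsto (fun x : ℝ => (x : ℂ) ^ (m - 1 / 2) * macdonaldK1d m x) (𝓝[>] 0)
      (𝓝 ((1 / 2) ^ (1 / 2 - m) * Complex.Gamma m / Real.sqrt Real.pi)) := by
  have h_neg := tendsto_cpow_mul_besselI1d (-m)
  have h_pos := (tendsto_ofReal_cpow_zero (c := 2 * m) (by simpa using hm_re)).mul
    (tendsto_cpow_mul_besselI1d m)
  have h := (h_neg.sub h_pos).div_const (Complex.sin (Real.pi * m))
  have h_limit : (Real.sqrt Real.pi * (1 / 2) ^ (1 / 2 + -m) * (Complex.Gamma (-m + 1))⁻¹ -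
        0 * (Real.sqrt Real.pi * (1 / 2) ^ (1 / 2 + m) * (Complex.Gamma (m + 1))⁻¹)) /
        Complex.sin (Real.pi * m) =
      (1 / 2) ^ (1 / 2 - m) * Complex.Gamma m / Real.sqrt Real.pi := by
    have h_sq : (Real.sqrt Real.pi : ℂ) * Real.sqrt Real.pi = Real.pi := by
      exact_mod_cast Real.mul_self_sqrt Real.pi_pos.le
    rw [zero_mul, sub_zero, neg_add_eq_sub, ← sub_eq_add_neg, mul_div_assoc,
      inv_Gamma_one_sub_div_sin hm, ← h_sq]
    field_simp
  rw [h_limit] at h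
  refine h.congr' ?_
  filter_upwards [self_mem_nhdsWithin] with x (hx : 0 < x)
  have h_cpow : (x : ℂ) ^ (2 * m) * (x : ℂ) ^ (-m - 1 / 2) = (x : ℂ) ^ (m - 1 / 2) := by
    rw [← Complex.cpow_add _ _ (ofReal_ne_zero.2 hx.ne')]
    ring_nf
  rw [neg_neg, ← mul_assoc, h_cpow, macdonaldK1d]
  ring

end BesselIAtZero

section Gaussian

variable {b : ℝ}

lemma exp_neg_mul_sub_mul_sq (a : ℝ) (hb : 0 < b) (u : ℝ) :
    Real.exp (-a * u - b * u ^ 2) =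
      Real.exp (a ^ 2 / (4 * b)) * Real.exp (-b * (u + a / (2 * b)) ^ 2) := by
  rw [← Real.exp_add]
  congr 1
  field_simp
  ring

lemma integrable_exp_neg_mul_sub_mul_sq (a : ℝ) (hb : 0 < b) :
    Integrable fun u : ℝ => Real.exp (-a * u - b * u ^ 2) := by
  simp only [exp_neg_mul_sub_mul_sq a hb]
  exact ((integrable_exp_neg_mul_sq hb).comp_add_right (a / (2 * b))).const_mul _

lemma integral_exp_neg_mul_sub_mul_sq (a : ℝ) (hb : 0 < b) :
    ∫ u : ℝ, Real.exp (-a * u - b * u ^ 2) =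
      Real.exp (a ^ 2 / (4 * b)) * Real.sqrt (Real.pi / b) := by
  simp only [exp_neg_mul_sub_mul_sq a hb]
  rw [integral_const_mul, integral_add_right_eq_self fun u : ℝ => Real.exp (-b * u ^ 2),
    integral_gaussian]

lemma one_add_sq_div_two_le_cosh (u : ℝ) : 1 + u ^ 2 / 2 ≤ Real.cosh u := by
  have h_sinh : (u / 2) ^ 2 ≤ Real.sinh (u / 2) ^ 2 := by
    rw [sq_le_sq, Real.abs_sinh]
    exact Real.self_le_sinh_iff.2 (abs_nonneg _)
  have h_cosh : Real.cosh u = 1 + 2 * Real.sinh (u / 2) ^ 2 := by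
    rw [← mul_div_cancel₀ u two_ne_zero, Real.cosh_two_mul, Real.cosh_sq]
    ring_nf
  linarith

end Gaussian

/-- The integrand `exp (-m u - z cosh u)` of the Schläfli integral representation of the Macdonald
function of order `m`. -/
noncomputable def macdonaldIntegrand (m z : ℂ) (u : ℝ) : ℂ :=
  Complex.exp (-m * u - z * Complex.cosh u)

/-- The Schläfli integral `∫ exp (-m u - z cosh u) du` over the real line; it is twice the classical
modified Bessel function `K_m(z)`. -/
noncomputable def macdonaldIntegral (m z : ℂ) : ℂ :=
  ∫ u : ℝ, macdonaldIntegrand m z u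

section MacdonaldIntegral

variable {m z : ℂ}

lemma norm_macdonaldIntegrand (m z : ℂ) (u : ℝ) :
    ‖macdonaldIntegrand m z u‖ = Real.exp (-m.re * u - z.re * Real.cosh u) := by
  rw [macdonaldIntegrand, Complex.norm_exp, ← ofReal_cosh, sub_re, re_mul_ofReal, re_mul_ofReal,
    neg_re]

lemma norm_macdonaldIntegrand_anti {w : ℂ} (h : z.re ≤ w.re) (u : ℝ) :
    ‖macdonaldIntegrand m w u‖ ≤ ‖macdonaldIntegrand m z u‖ := by
  rw [norm_macdonaldIntegrand, norm_macdonaldIntegrand]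
  have := (Real.cosh_pos u).le
  gcongr

lemma norm_macdonaldIntegrand_le (hz : 0 < z.re) (u : ℝ) :
    ‖macdonaldIntegrand m z u‖ ≤
      Real.exp (-z.re) * Real.exp (-m.re * u - z.re / 2 * u ^ 2) := by
  rw [norm_macdonaldIntegrand, ← Real.exp_add, Real.exp_le_exp]
  linarith [mul_le_mul_of_nonneg_left (one_add_sq_div_two_le_cosh u) hz.le]

lemma continuous_macdonaldIntegrand (m z : ℂ) : Continuous (macdonaldIntegrand m z) := by
  unfold macdonaldIntegrand
  fun_prop

lemma integrable_macdonaldIntegrand (m : ℂ) (hz : 0 < z.re) :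
    Integrable (macdonaldIntegrand m z) :=
  ((integrable_exp_neg_mul_sub_mul_sq m.re (half_pos hz)).const_mul _).mono'
    (continuous_macdonaldIntegrand m z).aestronglyMeasurable
    (Eventually.of_forall (norm_macdonaldIntegrand_le hz))

lemma norm_macdonaldIntegral_le (m : ℂ) (hz : 0 < z.re) :
    ‖macdonaldIntegral m z‖ ≤ Real.exp (-z.re) *
      (Real.exp (m.re ^ 2 / (2 * z.re)) * Real.sqrt (2 * Real.pi / z.re)) := by
  refine (norm_integral_le_of_norm_le
    ((integrable_exp_neg_mul_sub_mul_sq m.re (half_pos hz)).const_mul _)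
    (Eventually.of_forall (norm_macdonaldIntegrand_le hz))).trans_eq ?_
  rw [integral_const_mul, integral_exp_neg_mul_sub_mul_sq _ (half_pos hz)]
  rw [show 4 * (z.re / 2) = 2 * z.re by ring, div_div_eq_mul_div, mul_comm Real.pi]

lemma macdonaldIntegrand_sub_one (m z : ℂ) (u : ℝ) :
    macdonaldIntegrand (m - 1) z u = Complex.exp u * macdonaldIntegrand m z u := by
  rw [macdonaldIntegrand, macdonaldIntegrand, ← Complex.exp_add]
  ring_nf

lemma macdonaldIntegrand_add_one (m z : ℂ) (u : ℝ) :
    macdonaldIntegrand (m + 1) z u = Complex.exp (-u) * macdonaldIntegrand m z u := by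
  rw [macdonaldIntegrand, macdonaldIntegrand, ← Complex.exp_add]
  ring_nf

lemma macdonaldIntegral_neg (m z : ℂ) : macdonaldIntegral (-m) z = macdonaldIntegral m z := by
  rw [macdonaldIntegral, macdonaldIntegral, ← integral_neg_eq_self]
  simp [macdonaldIntegrand]

lemma hasDerivAt_macdonaldIntegral (m : ℂ) (hz : 0 < z.re) :
    HasDerivAt (macdonaldIntegral m)
      (-(macdonaldIntegral (m - 1) z + macdonaldIntegral (m + 1) z) / 2) z := by
  set F' : ℂ → ℝ → ℂ := fun w u =>
    -(macdonaldIntegrand (m - 1) w u + macdonaldIntegrand (m + 1) w u) / 2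
  have h_half : 0 < (z / 2).re := by simpa using hz
  have h_deriv : ∀ (u : ℝ) (w : ℂ), HasDerivAt (macdonaldIntegrand m · u) (F' w u) w := by
    intro u w
    have h := (((hasDerivAt_id w).mul_const (Complex.cosh u)).const_sub (-m * u)).cexp
    refine h.congr_deriv ?_
    simp only [F', macdonaldIntegrand_sub_one, macdonaldIntegrand_add_one]
    rw [macdonaldIntegrand, id_eq, Complex.cosh]
    ring
  have h_bound : Integrable fun u =>
      (‖macdonaldIntegrand (m - 1) (z / 2) u‖ + ‖macdonaldIntegrand (m + 1) (z / 2) u‖) / 2 :=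
    ((integrable_macdonaldIntegrand _ h_half).norm.add
      (integrable_macdonaldIntegrand _ h_half).norm).div_const 2
  have h_nhds : {w : ℂ | z.re / 2 < w.re} ∈ 𝓝 z :=
    (isOpen_lt continuous_const continuous_re).mem_nhds (half_lt_self hz)
  have h := (hasDerivAt_integral_of_dominated_loc_of_deriv_le (F' := F') h_nhds
    (Eventually.of_forall fun w => (continuous_macdonaldIntegrand m w).aestronglyMeasurable)
    (integrable_macdonaldIntegrand m hz)
    (((continuous_macdonaldIntegrand _ z).add
      (continuous_macdonaldIntegrand _ z)).neg.div_const 2).aestronglyMeasurable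
    (Eventually.of_forall fun u w hw => ?_) h_bound
    (Eventually.of_forall fun u w _ => h_deriv u w)).2
  · rwa [integral_div, integral_neg, integral_add (integrable_macdonaldIntegrand _ hz)
      (integrable_macdonaldIntegrand _ hz)] at h
  · have h_re : (z / 2).re ≤ w.re := by simpa using (show z.re / 2 < w.re from hw).le
    rw [norm_div, norm_neg, Complex.norm_ofNat]
    gcongr
    exact (norm_add_le _ _).trans
      (add_le_add (norm_macdonaldIntegrand_anti h_re u) (norm_macdonaldIntegrand_anti h_re u))

lemma two_mul_macdonaldIntegral (m : ℂ) (hz : 0 < z.re) :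
    2 * m * macdonaldIntegral m z =
      z * (macdonaldIntegral (m + 1) z - macdonaldIntegral (m - 1) z) := by
  have h_deriv : ∀ u : ℝ, HasDerivAt (macdonaldIntegrand m z)
      (-m * macdonaldIntegrand m z u -
        z / 2 * (macdonaldIntegrand (m - 1) z u - macdonaldIntegrand (m + 1) z u)) u := by
    intro u
    have h := (((hasDerivAt_id (u : ℂ)).const_mul (-m)).sub
      ((Complex.hasDerivAt_cosh u).const_mul z)).cexp.comp_ofReal
    refine h.congr_deriv ?_
    rw [macdonaldIntegrand_sub_one, macdonaldIntegrand_add_one, macdonaldIntegrand, Complex.sinh]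
    simp only [Pi.sub_apply, id_eq]
    ring
  have h_int := fun ν => integrable_macdonaldIntegrand ν hz
  have h_diff : Integrable fun u =>
      z / 2 * (macdonaldIntegrand (m - 1) z u - macdonaldIntegrand (m + 1) z u) :=
    ((h_int (m - 1)).sub (h_int (m + 1))).const_mul (z / 2)
  have h_zero := integral_eq_zero_of_hasDerivAt_of_integrable h_deriv
    (((h_int m).const_mul (-m)).sub h_diff) (h_int m)
  rw [integral_sub ((h_int m).const_mul (-m)) h_diff, integral_const_mul, integral_const_mul,
    integral_sub (h_int _) (h_int _)] at h_zero
  unfold macdonaldIntegral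
  linear_combination -2 * h_zero

theorem isMacdonaldFamily_macdonaldIntegral :
    IsMacdonaldFamily fun m z =>
      (z / 2) ^ (1 / 2 : ℂ) / Real.sqrt Real.pi * macdonaldIntegral m z where
  neg m z := by rw [macdonaldIntegral_neg]
  hasDerivAt m z hz := by
    have hz₀ := ne_zero_of_re_pos hz
    have h_pow := ((hasDerivAt_id z).div_const 2).cpow_const (c := 1 / 2)
      (div_two_mem_slitPlane hz)
    refine ((h_pow.div_const _).mul (hasDerivAt_macdonaldIntegral m hz)).congr_deriv ?_
    have h_rec := two_mul_macdonaldIntegral m hz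
    rw [id_eq, Complex.cpow_sub _ _ (div_ne_zero hz₀ two_ne_zero), Complex.cpow_one]
    linear_combination (norm := (field_simp; ring))
      (z / 2) ^ (1 / 2 : ℂ) / Real.sqrt Real.pi / (2 * z) * h_rec
  recurrence m z hz := by
    linear_combination (z / 2) ^ (1 / 2 : ℂ) / Real.sqrt Real.pi * two_mul_macdonaldIntegral m hz

end MacdonaldIntegral

section MacdonaldIntegralAtZero

variable {m : ℂ}

lemma integral_exp_mul_sub_half_exp (hm : 0 < m.re) :
    ∫ u : ℝ, Complex.exp (m * u - Complex.exp u / 2) = 2 ^ m * Complex.Gamma m := by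
  have h_Gamma := Complex.integral_cpow_mul_exp_neg_mul_Ioi hm (one_half_pos (α := ℝ))
  rw [← Real.range_exp, ← image_univ, integral_image_eq_integral_abs_deriv_smul MeasurableSet.univ
    (fun u _ => (Real.hasDerivAt_exp u).hasDerivWithinAt) Real.exp_injective.injOn,
    setIntegral_univ] at h_Gamma
  convert h_Gamma using 1
  · congr 1 with u
    have h_cpow : (Complex.exp u) ^ (m - 1) = Complex.exp (u * (m - 1)) := by
      rw [Complex.cpow_def_of_ne_zero (Complex.exp_ne_zero _), ← ofReal_exp, ← ofReal_log
        (Real.exp_pos u).le, Real.log_exp]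
    rw [abs_of_pos (Real.exp_pos u), real_smul, ofReal_exp, h_cpow, ← Complex.exp_add,
      ← Complex.exp_add]
    push_cast
    ring_nf
  · norm_num

lemma cpow_mul_macdonaldIntegral (m : ℂ) {x : ℝ} (hx : 0 < x) :
    (x : ℂ) ^ m * macdonaldIntegral m x =
      ∫ u : ℝ, Complex.exp (m * u - (Complex.exp u + x ^ 2 * Complex.exp (-u)) / 2) := by
  have hx₀ : (x : ℂ) ≠ 0 := ofReal_ne_zero.2 hx.ne'
  rw [← macdonaldIntegral_neg, macdonaldIntegral,
    ← integral_sub_right_eq_self (macdonaldIntegrand (-m) x) (Real.log x), ← integral_const_mul]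
  congr 1 with u
  rw [macdonaldIntegrand, Complex.cpow_def_of_ne_zero hx₀, ← Complex.exp_add, Complex.cosh,
    ofReal_sub, ofReal_log hx.le, neg_sub, Complex.exp_sub, Complex.exp_sub, Complex.exp_log hx₀,
    Complex.exp_neg]
  congr 1
  field_simp
  ring

lemma tendsto_cpow_mul_macdonaldIntegral (hm : 0 < m.re) :
    Tendsto (fun x : ℝ => (x : ℂ) ^ m * macdonaldIntegral m x) (𝓝[>] 0)
      (𝓝 (2 ^ m * Complex.Gamma m)) := by
  set F : ℝ → ℝ → ℂ := fun x u =>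
    Complex.exp (m * u - (Complex.exp u + x ^ 2 * Complex.exp (-u)) / 2)
  have h_zero : F 0 = fun u : ℝ => Complex.exp (m * u - Complex.exp u / 2) := by
    ext u
    simp [F]
  have h_integrable : Integrable (F 0) := by
    refine .of_integral_ne_zero ?_
    rw [h_zero, integral_exp_mul_sub_half_exp hm]
    exact mul_ne_zero (by simp [Complex.cpow_eq_zero_iff]) (Complex.Gamma_ne_zero_of_re_pos hm)
  have h_norm_le : ∀ x u, ‖F x u‖ ≤ ‖F 0 u‖ := by
    intro x u
    simp only [F, Complex.norm_exp, ← ofReal_exp, ← ofReal_neg, ← ofReal_pow, ← ofReal_mul,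
      ← ofReal_add, Real.exp_le_exp, sub_re, div_ofNat_re, ofReal_re]
    have : 0 ≤ x ^ 2 * Real.exp (-u) := by positivity
    linarith
  have h_cont : ∀ u, Continuous fun x => F x u := fun u => by fun_prop
  have h_tendsto := tendsto_integral_filter_of_dominated_convergence (l := 𝓝[>] 0)
    (fun u => ‖F 0 u‖)
    (Eventually.of_forall fun x =>
      (show Continuous (F x) by fun_prop).aestronglyMeasurable)
    (Eventually.of_forall fun x => Eventually.of_forall (h_norm_le x)) h_integrable.norm
    (Eventually.of_forall fun u => ((h_cont u).tendsto 0).mono_left nhdsWithin_le_nhds)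
  rw [h_zero, integral_exp_mul_sub_half_exp hm] at h_tendsto
  refine h_tendsto.congr' ?_
  filter_upwards [self_mem_nhdsWithin] with x hx
  exact (cpow_mul_macdonaldIntegral m hx).symm

end MacdonaldIntegralAtZero

theorem macdonaldK1d_eq_macdonaldIntegral {m z : ℂ} (hm : m ∈ integerComplement)
    (hz : 0 < z.re) :
    macdonaldK1d m z = (z / 2) ^ (1 / 2 : ℂ) / Real.sqrt Real.pi * macdonaldIntegral m z := by
  refine isMacdonaldFamily_macdonaldK1d.eq_of_tendsto isMacdonaldFamily_macdonaldIntegral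
    (fun μ hμ hμ_re => ?_) hm hz
  have h_integral := (tendsto_cpow_mul_macdonaldIntegral hμ_re).const_mul
    ((1 / 2) ^ (1 / 2 : ℂ) / Real.sqrt Real.pi : ℂ)
  have h_limit : (1 / 2 : ℂ) ^ (1 / 2 - μ) * Complex.Gamma μ / Real.sqrt Real.pi =
      (1 / 2) ^ (1 / 2 : ℂ) / Real.sqrt Real.pi * (2 ^ μ * Complex.Gamma μ) := by
    have h_two : (1 / 2 : ℂ) ^ (-μ) = 2 ^ μ := by
      rw [one_div, Complex.inv_cpow _ _ (by simp [Real.pi_ne_zero.symm]), Complex.cpow_neg, inv_inv]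
    rw [sub_eq_add_neg, Complex.cpow_add _ _ (by norm_num), h_two]
    ring
  have h := (tendsto_cpow_mul_macdonaldK1d hμ hμ_re).sub h_integral
  rw [h_limit, sub_self] at h
  refine h.congr' ?_
  filter_upwards [self_mem_nhdsWithin] with x (hx : 0 < x)
  have hx₀ : (x : ℂ) ≠ 0 := ofReal_ne_zero.2 hx.ne'
  have h_half : (x / 2 : ℂ) ^ (1 / 2 : ℂ) = (1 / 2) ^ (1 / 2 : ℂ) * (x : ℂ) ^ (1 / 2 : ℂ) := by
    rw [← mul_ofReal_cpow (by norm_num) hx]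
    ring_nf
  have h_cpow : (x : ℂ) ^ μ = (x : ℂ) ^ (μ - 1 / 2) * (x : ℂ) ^ (1 / 2 : ℂ) := by
    rw [← Complex.cpow_add _ _ hx₀, sub_add_cancel]
  rw [h_half, h_cpow]
  ring

section Energy

lemma two_mul_mul_sub_add_four_mul_inner_le {E : Type*} [NormedAddCommGroup E]
    [InnerProductSpace ℝ E] {κ : ℝ} (hκ : 0 < κ) (r : ℝ) (u v : E) :
    2 * r * (‖u‖ ^ 2 - ‖v‖ ^ 2) + 4 * κ * inner ℝ u v ≤
      (2 * κ + r ^ 2 / κ) * (‖u‖ ^ 2 + ‖v‖ ^ 2) := by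
  have h_sq : 0 ≤ (2 * ‖κ • (u - v) - (r / 2) • (u + v)‖ ^ 2 + r ^ 2 / 2 * ‖u - v‖ ^ 2) / κ := by
    positivity
  refine sub_nonneg.1 (h_sq.trans_eq ?_)
  simp only [← real_inner_self_eq_norm_sq, inner_sub_left, inner_sub_right, inner_add_left,
    inner_add_right, real_inner_smul_left, real_inner_smul_right, real_inner_comm u v]
  field_simp
  ring

lemma two_mul_inner_add_two_mul_inner (a k u v : ℂ) :
    2 * inner ℝ u (a * u + k * v) + 2 * inner ℝ v (k * u - a * v) =
      2 * a.re * (‖u‖ ^ 2 - ‖v‖ ^ 2) + 4 * k.re * inner ℝ u v := by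
  simp only [Complex.inner, Complex.sq_norm, Complex.normSq_apply, mul_re, mul_im, add_re, add_im,
    sub_re, sub_im, conj_re, conj_im]
  ring

variable {k μ : ℂ} {u v : ℝ → ℂ}

lemma antitoneOn_exp_mul_sq_norm_add_sq_norm (hk : 0 < k.re)
    (hu : ∀ x, 0 < x → HasDerivAt u (μ / x * u x + k * v x) x)
    (hv : ∀ x, 0 < x → HasDerivAt v (k * u x - μ / x * v x) x) :
    AntitoneOn (fun x => Real.exp (μ.re ^ 2 / k.re / x - 2 * k.re * x) * (‖u x‖ ^ 2 + ‖v x‖ ^ 2))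
      (Ioi 0) := by
  set c := μ.re ^ 2 / k.re with hc
  have h_deriv : ∀ x ∈ Ioi (0 : ℝ), HasDerivAt
      (fun x => Real.exp (c / x - 2 * k.re * x) * (‖u x‖ ^ 2 + ‖v x‖ ^ 2))
      (Real.exp (c / x - 2 * k.re * x) * (2 * (μ.re / x) * (‖u x‖ ^ 2 - ‖v x‖ ^ 2) +
        4 * k.re * inner ℝ (u x) (v x) -
          (2 * k.re + (μ.re / x) ^ 2 / k.re) * (‖u x‖ ^ 2 + ‖v x‖ ^ 2))) x := by
    intro x (hx : 0 < x)
    have h_exponent : HasDerivAt (fun x => c / x - 2 * k.re * x)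
        (-(2 * k.re + (μ.re / x) ^ 2 / k.re)) x := by
      refine (((hasDerivAt_inv hx.ne').const_mul c).sub
        ((hasDerivAt_id x).const_mul (2 * k.re))).congr_deriv ?_
      rw [hc]
      field_simp
      ring
    have h_sq := (hu x hx).norm_sq.add (hv x hx).norm_sq
    rw [two_mul_inner_add_two_mul_inner, div_ofReal_re] at h_sq
    exact (h_exponent.exp.mul h_sq).congr_deriv (by simp only [Pi.add_apply]; ring)
  refine antitoneOn_of_deriv_nonpos (convex_Ioi 0)
    (fun x hx => (h_deriv x hx).continuousAt.continuousWithinAt) ?_ ?_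
  · rw [interior_Ioi]
    exact fun x hx => (h_deriv x hx).differentiableAt.differentiableWithinAt
  · rw [interior_Ioi]
    intro x hx
    rw [(h_deriv x hx).deriv]
    exact mul_nonpos_of_nonneg_of_nonpos (Real.exp_nonneg _)
      (sub_nonpos.2 (two_mul_mul_sub_add_four_mul_inner_le hk _ _ _))

end Energy

section Bounds

variable {k m : ℂ}

lemma re_mul_ofReal_pos (hk : 0 < k.re) {x : ℝ} (hx : 0 < x) : 0 < (k * x).re := by
  rw [re_mul_ofReal]
  exact mul_pos hk hx

lemma hasDerivAt_comp_mul_ofReal {F : ℂ → ℂ} {F' : ℂ} {x : ℝ} (hF : HasDerivAt F F' (k * x)) :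
    HasDerivAt (fun t : ℝ => F (k * t)) (k * F') x := by
  have h := (hF.comp (x : ℂ) ((hasDerivAt_id _).const_mul k)).comp_ofReal
  rwa [mul_one, mul_comm] at h

lemma antitoneOn_exp_mul_sq_norm_besselI1d (m : ℂ) (hk : 0 < k.re) :
    AntitoneOn (fun x : ℝ => Real.exp ((1 / 2 + m).re ^ 2 / k.re / x - 2 * k.re * x) *
      (‖besselI1d m (k * x)‖ ^ 2 + ‖besselI1d (m + 1) (k * x)‖ ^ 2)) (Ioi 0) := by
  have hk₀ := ne_zero_of_re_pos hk
  refine antitoneOn_exp_mul_sq_norm_add_sq_norm hk (fun x hx => ?_) (fun x hx => ?_)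
  · refine (hasDerivAt_comp_mul_ofReal
      (hasDerivAt_besselI1d_add_one m (re_mul_ofReal_pos hk hx))).congr_deriv ?_
    field_simp
  · refine (hasDerivAt_comp_mul_ofReal
      (hasDerivAt_besselI1d_sub_one (m + 1) (re_mul_ofReal_pos hk hx))).congr_deriv ?_
    rw [add_sub_cancel_right]
    field_simp
    ring

lemma exists_norm_besselI1d_le_exp_of_one_le (m : ℂ) (hk : 0 < k.re) :
    ∃ C : ℝ, ∀ x : ℝ, 1 ≤ x → ‖besselI1d m (k * x)‖ ≤ C * Real.exp (k.re * x) := by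
  obtain ⟨D, hD⟩ : ∃ D : ℝ, ∀ x : ℝ, 1 ≤ x →
      Real.exp ((1 / 2 + m).re ^ 2 / k.re / x - 2 * k.re * x) *
        (‖besselI1d m (k * x)‖ ^ 2 + ‖besselI1d (m + 1) (k * x)‖ ^ 2) ≤ D :=
    ⟨_, fun x hx => antitoneOn_exp_mul_sq_norm_besselI1d m hk (mem_Ioi.2 one_pos)
      (mem_Ioi.2 (one_pos.trans_le hx)) hx⟩
  refine ⟨Real.sqrt D, fun x hx => ?_⟩
  have h_sq : (‖besselI1d m (k * x)‖ * Real.exp (-(k.re * x))) ^ 2 ≤ D := by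
    refine le_trans ?_ (hD x hx)
    rw [mul_pow, ← Real.exp_nat_mul, mul_comm]
    gcongr
    · have : 0 ≤ (1 / 2 + m).re ^ 2 / k.re / x := by positivity
      push_cast
      linarith
    · exact le_add_of_nonneg_right (sq_nonneg _)
  have h := Real.le_sqrt_of_sq_le h_sq
  rwa [Real.exp_neg, ← div_eq_mul_inv, div_le_iff₀ (Real.exp_pos _)] at h

lemma exists_norm_besselI1d_le_rpow_of_le_one (m : ℂ) (hk : k ≠ 0) :
    ∃ C : ℝ, ∀ x ∈ Ioc (0 : ℝ) 1, ‖besselI1d m (k * x)‖ ≤ C * x ^ (1 / 2 + m.re) := by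
  have h_cont : Continuous fun x : ℝ => (Real.sqrt Real.pi : ℂ) * (k / 2) ^ (1 / 2 + m) *
      zeroF1reg (m + 1) ((k * x) ^ 2 / 4) :=
    continuous_const.mul ((continuous_zeroF1reg _).comp (by fun_prop))
  obtain ⟨C, hC⟩ := isCompact_Icc.exists_bound_of_continuousOn
    (h_cont.continuousOn (s := Icc (0 : ℝ) 1))
  refine ⟨C, fun x hx => ?_⟩
  rw [besselI1d_mul_ofReal m hk hx.1, norm_mul, norm_cpow_eq_rpow_re_of_pos hx.1, mul_comm,
    show ((1 : ℂ) / 2 + m).re = 1 / 2 + m.re by simp]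
  gcongr
  · exact Real.rpow_nonneg hx.1.le _
  · exact hC x (Ioc_subset_Icc_self hx)

lemma norm_macdonaldK1d_le (hm : m ∈ integerComplement) {z : ℂ} (hz : 0 < z.re) :
    ‖macdonaldK1d m z‖ ≤
      Real.sqrt (‖z‖ / z.re) * Real.exp (m.re ^ 2 / (2 * z.re)) * Real.exp (-z.re) := by
  have h_cpow : ‖(z / 2) ^ (1 / 2 : ℂ)‖ = Real.sqrt (‖z‖ / 2) := by
    rw [show (1 / 2 : ℂ) = ((1 / 2 : ℝ) : ℂ) by push_cast; rfl, norm_cpow_real, norm_div,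
      Complex.norm_two, Real.sqrt_eq_rpow]
  have h_sqrt : Real.sqrt (‖z‖ / 2) / Real.sqrt Real.pi * Real.sqrt (2 * Real.pi / z.re) =
      Real.sqrt (‖z‖ / z.re) := by
    rw [← Real.sqrt_div (by positivity), ← Real.sqrt_mul (by positivity)]
    congr 1
    field_simp
  rw [macdonaldK1d_eq_macdonaldIntegral hm hz, norm_mul, norm_div, h_cpow,
    Complex.norm_of_nonneg (Real.sqrt_nonneg _), ← h_sqrt]
  refine (mul_le_mul_of_nonneg_left (norm_macdonaldIntegral_le m hz)
    (by positivity)).trans_eq ?_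
  ring

lemma exists_norm_macdonaldK1d_le_exp_of_one_le (hm : m ∈ integerComplement) (hk : 0 < k.re) :
    ∃ C : ℝ, ∀ x : ℝ, 1 ≤ x → ‖macdonaldK1d m (k * x)‖ ≤ C * Real.exp (-(k.re * x)) := by
  refine ⟨Real.sqrt (‖k‖ / k.re) * Real.exp (m.re ^ 2 / (2 * k.re)), fun x hx => ?_⟩
  have hx₀ : 0 < x := one_pos.trans_le hx
  refine (norm_macdonaldK1d_le hm (re_mul_ofReal_pos hk hx₀)).trans ?_
  rw [norm_mul, Complex.norm_of_nonneg hx₀.le, re_mul_ofReal, mul_div_mul_right _ _ hx₀.ne']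
  gcongr
  exact le_mul_of_one_le_right hk.le hx

lemma exists_norm_macdonaldK1d_le_rpow_of_le_one (m : ℂ) (hk : k ≠ 0) :
    ∃ C : ℝ, ∀ x ∈ Ioc (0 : ℝ) 1, ‖macdonaldK1d m (k * x)‖ ≤ C * x ^ (1 / 2 - |m.re|) := by
  obtain ⟨C, hC⟩ := exists_norm_besselI1d_le_rpow_of_le_one m hk
  obtain ⟨D, hD⟩ := exists_norm_besselI1d_le_rpow_of_le_one (-m) hk
  refine ⟨(|D| + |C|) / ‖Complex.sin (Real.pi * m)‖, fun x hx => ?_⟩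
  have h_rpow : ∀ b : ℝ, -|m.re| ≤ b → x ^ (1 / 2 + b) ≤ x ^ (1 / 2 - |m.re|) := fun b hb =>
    Real.rpow_le_rpow_of_exponent_ge hx.1 hx.2 (by linarith)
  have h_bound : ∀ {B b t : ℝ}, -|m.re| ≤ b → t ≤ B * x ^ (1 / 2 + b) →
      t ≤ |B| * x ^ (1 / 2 - |m.re|) := fun hb ht =>
    ht.trans (mul_le_mul (le_abs_self _) (h_rpow _ hb) (Real.rpow_nonneg hx.1.le _)
      (abs_nonneg _))
  rw [macdonaldK1d, norm_div, div_mul_eq_mul_div, add_mul]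
  gcongr
  exact (norm_sub_le _ _).trans (add_le_add
    (h_bound (neg_le_neg (le_abs_self _)) (hD x hx)) (h_bound (neg_abs_le _) (hC x hx)))

lemma exists_le_mul_min_one_rpow_mul_exp {φ : ℝ → ℝ} {b c : ℝ}
    (h_small : ∃ C, ∀ x ∈ Ioc (0 : ℝ) 1, φ x ≤ C * x ^ b)
    (h_large : ∃ C, ∀ x, 1 ≤ x → φ x ≤ C * Real.exp (c * x)) :
    ∃ C, 0 ≤ C ∧ ∀ x, 0 < x → φ x ≤ C * (min x 1 ^ b * Real.exp (c * x)) := by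
  obtain ⟨C, hC⟩ := h_small
  obtain ⟨D, hD⟩ := h_large
  refine ⟨|C| * Real.exp |c| + |D|, by positivity, fun x hx => ?_⟩
  rcases le_total x 1 with hx₁ | hx₁
  · rw [min_eq_left hx₁]
    have h_exp : 1 ≤ Real.exp |c| * Real.exp (c * x) := by
      rw [← Real.exp_add, Real.one_le_exp_iff]
      nlinarith [neg_abs_le c, abs_nonneg c]
    calc φ x ≤ |C| * x ^ b * 1 := by
          rw [mul_one]
          exact (hC x ⟨hx, hx₁⟩).trans (by gcongr; exact le_abs_self C)
      _ ≤ |C| * x ^ b * (Real.exp |c| * Real.exp (c * x)) := by gcongr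
      _ = |C| * Real.exp |c| * (x ^ b * Real.exp (c * x)) := by ring
      _ ≤ _ := by gcongr; exact le_add_of_nonneg_right (abs_nonneg D)
  · rw [min_eq_right hx₁, Real.one_rpow, one_mul]
    refine (hD x hx₁).trans ?_
    gcongr
    exact (le_abs_self D).trans (le_add_of_nonneg_left (by positivity))

lemma rpow_add_mul_rpow_sub_abs_le {s t : ℝ} (hs : 0 < s) (hst : s ≤ t) (p a : ℝ) :
    s ^ (p + a) * t ^ (p - |a|) ≤ s ^ (p + min a 0) * t ^ (p + min a 0) := by
  have ht : 0 < t := hs.trans_le hst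
  have h_rpow_max : s ^ max a 0 ≤ t ^ max a 0 :=
    Real.rpow_le_rpow hs.le hst (le_max_right a 0)
  have h_exponent : max a 0 + (p - |a|) = p + min a 0 := by
    have h := max_sub_min_eq_abs' a 0
    rw [sub_zero] at h
    linarith
  calc s ^ (p + a) * t ^ (p - |a|)
      = s ^ (p + min a 0) * s ^ max a 0 * t ^ (p - |a|) := by
        rw [← Real.rpow_add hs, add_assoc, min_add_max, add_zero]
    _ ≤ s ^ (p + min a 0) * t ^ max a 0 * t ^ (p - |a|) := by gcongr
    _ = s ^ (p + min a 0) * t ^ (p + min a 0) := by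
        rw [mul_assoc, ← Real.rpow_add ht, h_exponent]

lemma exists_norm_besselI1d_mul_macdonaldK1d_le (hm : m ∈ integerComplement) (hk : 0 < k.re) :
    ∃ C : ℝ, ∀ x y : ℝ, 0 < x → 0 < y →
      ‖besselI1d m (k * min x y) * macdonaldK1d m (k * max x y)‖ ≤
        C * (min x 1 ^ (1 / 2 + min m.re 0) * Real.exp (-(k.re * |x - y|)) *
          min y 1 ^ (1 / 2 + min m.re 0)) := by
  have hk₀ := ne_zero_of_re_pos hk
  obtain ⟨C, hC, hI⟩ := exists_le_mul_min_one_rpow_mul_exp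
    (exists_norm_besselI1d_le_rpow_of_le_one m hk₀) (exists_norm_besselI1d_le_exp_of_one_le m hk)
  obtain ⟨D, hD, hK⟩ := exists_le_mul_min_one_rpow_mul_exp (c := -k.re)
    (exists_norm_macdonaldK1d_le_rpow_of_le_one m hk₀)
    (by simpa only [neg_mul] using exists_norm_macdonaldK1d_le_exp_of_one_le hm hk)
  refine ⟨C * D, fun x y hx hy => ?_⟩
  wlog hxy : x ≤ y generalizing x y
  · rw [min_comm x y, max_comm x y, abs_sub_comm]
    exact (this y x hy hx (le_of_not_ge hxy)).trans_eq (by ring)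
  have hx₁ : 0 < min x 1 := lt_min hx one_pos
  rw [min_eq_left hxy, max_eq_right hxy, abs_of_nonpos (sub_nonpos.2 hxy), norm_mul]
  calc ‖besselI1d m (k * x)‖ * ‖macdonaldK1d m (k * y)‖
      ≤ C * (min x 1 ^ (1 / 2 + m.re) * Real.exp (k.re * x)) *
          (D * (min y 1 ^ (1 / 2 - |m.re|) * Real.exp (-k.re * y))) := by
        gcongr
        exacts [hI x hx, hK y hy]
    _ = C * D * (min x 1 ^ (1 / 2 + m.re) * min y 1 ^ (1 / 2 - |m.re|)) *
          Real.exp (-(k.re * -(x - y))) := by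
        rw [show -(k.re * -(x - y)) = k.re * x + -k.re * y by ring, Real.exp_add]
        ring
    _ ≤ C * D * (min x 1 ^ (1 / 2 + min m.re 0) * min y 1 ^ (1 / 2 + min m.re 0)) *
          Real.exp (-(k.re * -(x - y))) := by
        gcongr C * D * ?_ * _
        exact rpow_add_mul_rpow_sub_abs_le hx₁ (min_le_min_right 1 hxy) _ _
    _ = _ := by ring

end Bounds

section Schur

variable {α β : Type*} [MeasurableSpace α] [MeasurableSpace β] {μ : Measure α} {ν : Measure β}
  {A B : ℝ≥0∞}

lemma lintegral_lintegral_sqrt_kernel_mul_sq_le {K : α → β → ℝ≥0∞} {q : β → ℝ≥0∞}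
    (hK : Measurable (Function.uncurry K)) (hq : Measurable q)
    (hA : ∀ x, ∫⁻ y, K x y * q y ^ (2 : ℝ) ∂ν ≤ A) {u : α → ℝ≥0∞} (hu : AEMeasurable u μ) :
    ∫⁻ x, ∫⁻ y, (K x y ^ (1 / 2 : ℝ) * (q y * u x)) ^ (2 : ℝ) ∂ν ∂μ ≤
      A * ∫⁻ x, u x ^ (2 : ℝ) ∂μ := by
  rw [← lintegral_const_mul'' _ (hu.pow_const _)]
  refine lintegral_mono fun x => ?_
  have h_sq (a : ℝ≥0∞) : (a ^ (1 / 2 : ℝ)) ^ (2 : ℝ) = a := by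
    rw [← ENNReal.rpow_mul, one_div_mul_cancel two_ne_zero, ENNReal.rpow_one]
  have h_meas : Measurable fun y => K x y * q y ^ (2 : ℝ) :=
    (hK.comp measurable_prodMk_left).mul (hq.pow_const _)
  simp only [ENNReal.mul_rpow_of_nonneg _ _ zero_le_two, h_sq, ← mul_assoc]
  rw [lintegral_mul_const _ h_meas]
  gcongr
  exact hA x

variable [SFinite μ] [SFinite ν]

theorem lintegral_lintegral_mul_weighted_kernel_mul_le {K : α → β → ℝ≥0∞} {p : α → ℝ≥0∞}
    {q : β → ℝ≥0∞} (hK : Measurable (Function.uncurry K)) (hp : Measurable p) (hq : Measurable q)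
    (hA : ∀ x, ∫⁻ y, K x y * q y ^ (2 : ℝ) ∂ν ≤ A) (hB : ∀ y, ∫⁻ x, K x y * p x ^ (2 : ℝ) ∂μ ≤ B)
    {u : α → ℝ≥0∞} {v : β → ℝ≥0∞} (hu : AEMeasurable u μ) (hv : AEMeasurable v ν) :
    ∫⁻ x, ∫⁻ y, u x * (p x * K x y * q y) * v y ∂ν ∂μ ≤
      (A * ∫⁻ x, u x ^ (2 : ℝ) ∂μ) ^ (1 / 2 : ℝ) * (B * ∫⁻ y, v y ^ (2 : ℝ) ∂ν) ^ (1 / 2 : ℝ) := by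
  set φ : α × β → ℝ≥0∞ := fun z => K z.1 z.2 ^ (1 / 2 : ℝ) * (q z.2 * u z.1)
  set ψ : α × β → ℝ≥0∞ := fun z => K z.1 z.2 ^ (1 / 2 : ℝ) * (p z.1 * v z.2)
  have hφ : AEMeasurable φ (μ.prod ν) := (hK.pow_const _).aemeasurable.mul
    ((hq.comp measurable_snd).aemeasurable.mul hu.comp_fst)
  have hψ : AEMeasurable ψ (μ.prod ν) := (hK.pow_const _).aemeasurable.mul
    ((hp.comp measurable_fst).aemeasurable.mul hv.comp_snd)
  have hφ_sq : ∫⁻ z, φ z ^ (2 : ℝ) ∂μ.prod ν ≤ A * ∫⁻ x, u x ^ (2 : ℝ) ∂μ := by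
    rw [lintegral_prod _ (hφ.pow_const _)]
    exact lintegral_lintegral_sqrt_kernel_mul_sq_le hK hq hA hu
  have hψ_sq : ∫⁻ z, ψ z ^ (2 : ℝ) ∂μ.prod ν ≤ B * ∫⁻ y, v y ^ (2 : ℝ) ∂ν := by
    rw [lintegral_prod_symm _ (hψ.pow_const _)]
    exact lintegral_lintegral_sqrt_kernel_mul_sq_le (K := fun y x => K x y)
      (hK.comp measurable_swap) hp hB hv
  have h_sqrt (a : ℝ≥0∞) : a ^ (1 / 2 : ℝ) * a ^ (1 / 2 : ℝ) = a := by
    rw [← ENNReal.rpow_add_of_nonneg _ _ one_half_pos.le one_half_pos.le, add_halves,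
      ENNReal.rpow_one]
  calc ∫⁻ x, ∫⁻ y, u x * (p x * K x y * q y) * v y ∂ν ∂μ
      = ∫⁻ z, (φ * ψ) z ∂μ.prod ν := by
        rw [lintegral_prod _ (hφ.mul hψ)]
        refine lintegral_congr fun x => lintegral_congr fun y => ?_
        rw [Pi.mul_apply, mul_mul_mul_comm, h_sqrt]
        ring
    _ ≤ (∫⁻ z, φ z ^ (2 : ℝ) ∂μ.prod ν) ^ (1 / 2 : ℝ) *
          (∫⁻ z, ψ z ^ (2 : ℝ) ∂μ.prod ν) ^ (1 / 2 : ℝ) :=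
        ENNReal.lintegral_mul_le_Lp_mul_Lq _ Real.HolderConjugate.two_two hφ hψ
    _ ≤ _ := by gcongr

theorem integral_integral_norm_mul_norm_kernel_mul_norm_le {E F H : Type*} [NormedAddCommGroup E]
    [NormedAddCommGroup F] [NormedAddCommGroup H] {G : α → β → H} {K : α → β → ℝ} {p : α → ℝ}
    {q : β → ℝ} {C : ℝ} (hK : Measurable (Function.uncurry K)) (hp : Measurable p)
    (hq : Measurable q) (hA : ∀ x, ∫⁻ y, ‖K x y‖ₑ * ‖q y‖ₑ ^ (2 : ℝ) ∂ν ≤ A)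
    (hB : ∀ y, ∫⁻ x, ‖K x y‖ₑ * ‖p x‖ₑ ^ (2 : ℝ) ∂μ ≤ B) (hA_top : A ≠ ∞) (hB_top : B ≠ ∞)
    (hG : ∀ᵐ x ∂μ, ∀ᵐ y ∂ν, ‖G x y‖ ≤ C * (p x * K x y * q y)) {f : α → E} {g : β → F}
    (hf : MemLp f 2 μ) (hg : MemLp g 2 ν) :
    ∫ x, ∫ y, ‖f x‖ * ‖G x y‖ * ‖g y‖ ∂ν ∂μ ≤
      (‖C‖ₑ * (A ^ (1 / 2 : ℝ) * B ^ (1 / 2 : ℝ))).toReal * (eLpNorm f 2 μ).toReal *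
        (eLpNorm g 2 ν).toReal := by
  rw [← ENNReal.toReal_mul, ← ENNReal.toReal_mul]
  refine (le_abs_self _).trans ?_
  rw [← Real.norm_eq_abs, ← toReal_enorm]
  refine ENNReal.toReal_mono (by finiteness [hf.eLpNorm_ne_top, hg.eLpNorm_ne_top]) ?_
  calc ‖∫ x, ∫ y, ‖f x‖ * ‖G x y‖ * ‖g y‖ ∂ν ∂μ‖ₑ
      ≤ ∫⁻ x, ∫⁻ y, ‖C‖ₑ * (‖f x‖ₑ * (‖p x‖ₑ * ‖K x y‖ₑ * ‖q y‖ₑ) * ‖g y‖ₑ) ∂ν ∂μ := by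
        refine (enorm_integral_le_lintegral_enorm _).trans (lintegral_mono_ae ?_)
        filter_upwards [hG] with x hGx
        refine (enorm_integral_le_lintegral_enorm _).trans (lintegral_mono_ae ?_)
        filter_upwards [hGx] with y hGxy
        have h_enorm : ‖G x y‖ₑ ≤ ‖C‖ₑ * (‖p x‖ₑ * ‖K x y‖ₑ * ‖q y‖ₑ) := by
          simp only [← enorm_mul]
          exact enorm_le_iff_norm_le.2 (hGxy.trans (le_abs_self _))
        simp only [enorm_mul, enorm_norm]
        refine (mul_le_mul_left (mul_le_mul_right h_enorm _) _).trans_eq ?_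
        ring
    _ = ‖C‖ₑ * ∫⁻ x, ∫⁻ y, ‖f x‖ₑ * (‖p x‖ₑ * ‖K x y‖ₑ * ‖q y‖ₑ) * ‖g y‖ₑ ∂ν ∂μ := by
        simp only [lintegral_const_mul' _ _ enorm_ne_top]
    _ ≤ ‖C‖ₑ * ((A * ∫⁻ x, ‖f x‖ₑ ^ (2 : ℝ) ∂μ) ^ (1 / 2 : ℝ) *
          (B * ∫⁻ y, ‖g y‖ₑ ^ (2 : ℝ) ∂ν) ^ (1 / 2 : ℝ)) := by
        gcongr
        exact lintegral_lintegral_mul_weighted_kernel_mul_le hK.enorm hp.enorm hq.enorm hA hB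
          hf.1.enorm hg.1.enorm
    _ = ‖C‖ₑ * (A ^ (1 / 2 : ℝ) * B ^ (1 / 2 : ℝ)) * eLpNorm f 2 μ * eLpNorm g 2 ν := by
        simp only [eLpNorm_eq_lintegral_rpow_enorm_toReal two_ne_zero ENNReal.ofNat_ne_top,
          ENNReal.toReal_ofNat, ENNReal.mul_rpow_of_nonneg _ _ one_half_pos.le]
        ring

end Schur

lemma integrable_exp_neg_mul_abs {κ : ℝ} (hκ : 0 < κ) :
    Integrable fun t : ℝ => Real.exp (-(κ * |t|)) := by
  rw [← integrableOn_univ, ← Iic_union_Ioi (a := (0 : ℝ))]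
  refine IntegrableOn.union ?_ ?_
  · refine (integrableOn_exp_mul_Iic hκ 0).congr_fun (fun t ht => ?_) measurableSet_Iic
    rw [abs_of_nonpos (mem_Iic.1 ht), mul_neg, neg_neg]
  · refine (integrableOn_exp_mul_Ioi (neg_neg_of_pos hκ) 0).congr_fun (fun t ht => ?_)
      measurableSet_Ioi
    simp only [abs_of_pos (mem_Ioi.1 ht), neg_mul]

lemma exists_setLIntegral_exp_neg_mul_abs_sub_mul_rpow_le {κ δ : ℝ} (hκ : 0 < κ)
    (hδ : -(1 / 2) < δ) :
    ∃ M : ℝ≥0∞, M ≠ ∞ ∧ ∀ x : ℝ, ∫⁻ y in Ioi 0,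
      ‖Real.exp (-(κ * |x - y|))‖ₑ * ‖min y 1 ^ δ‖ₑ ^ (2 : ℝ) ≤ M := by
  have h_rpow : IntegrableOn (fun y : ℝ => y ^ (2 * δ)) (Ioc 0 1) :=
    (intervalIntegrable_iff_integrableOn_Ioc_of_le zero_le_one).1
      (intervalIntegral.intervalIntegrable_rpow' (by linarith))
  have h_exp := integrable_exp_neg_mul_abs hκ
  refine ⟨(∫⁻ y in Ioc (0 : ℝ) 1, ‖y ^ (2 * δ)‖ₑ) + ∫⁻ t : ℝ, ‖Real.exp (-(κ * |t|))‖ₑ,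
    ENNReal.add_ne_top.2 ⟨h_rpow.2.ne, h_exp.2.ne⟩, fun x => ?_⟩
  rw [← Ioc_union_Ioi_eq_Ioi zero_le_one]
  refine (lintegral_union_le _ _ _).trans (add_le_add ?_ ?_)
  · refine setLIntegral_mono' measurableSet_Ioc fun y hy => ?_
    have h_le_one : ‖Real.exp (-(κ * |x - y|))‖ₑ ≤ 1 := by
      rw [Real.enorm_of_nonneg (Real.exp_nonneg _), ENNReal.ofReal_le_one, Real.exp_le_one_iff]
      have := mul_nonneg hκ.le (abs_nonneg (x - y))
      linarith
    refine (mul_le_of_le_one_left' h_le_one).trans_eq ?_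
    rw [min_eq_left hy.2, ← Real.enorm_rpow_of_nonneg (Real.rpow_nonneg hy.1.le _) zero_le_two,
      ← Real.rpow_mul hy.1.le, mul_comm]
  · calc ∫⁻ y in Ioi 1, ‖Real.exp (-(κ * |x - y|))‖ₑ * ‖min y 1 ^ δ‖ₑ ^ (2 : ℝ)
        = ∫⁻ y in Ioi 1, ‖Real.exp (-(κ * |x - y|))‖ₑ := by
          refine setLIntegral_congr_fun measurableSet_Ioi fun y (hy : 1 < y) => ?_
          simp only [min_eq_right hy.le, Real.one_rpow, enorm_one, ENNReal.one_rpow, mul_one]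
      _ ≤ ∫⁻ y, ‖Real.exp (-(κ * |x - y|))‖ₑ := setLIntegral_le_lintegral _ _
      _ = _ := lintegral_sub_left_eq_self (fun t : ℝ => ‖Real.exp (-(κ * |t|))‖ₑ) x

/-- the Bessel resolvent kernel
`G(x,y) = k⁻¹ 𝓘_m(k min(x,y)) 𝓚_m(k max(x,y))` defines a bounded integral operator on
`L²(]0,∞[)`. -/
theorem bessel_resolvent_kernel_bounded (m k : ℂ) (hm : ∀ n : ℤ, m ≠ (n : ℂ))
    (hmre : -1 < m.re) (hk : 0 < k.re)
    (G : ℝ → ℝ → ℂ)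
    (hG : ∀ x y : ℝ, G x y =
      (1 / k) * besselI1d m (k * min x y) * macdonaldK1d m (k * max x y)) :
    ∃ C : ℝ, 0 ≤ C ∧ ∀ f g : ℝ → ℂ,
      MemLp f 2 (volume.restrict (Ioi (0 : ℝ))) →
      MemLp g 2 (volume.restrict (Ioi (0 : ℝ))) →
      (∫ x in Ioi (0 : ℝ), ∫ y in Ioi (0 : ℝ), ‖f x‖ * ‖G x y‖ * ‖g y‖) ≤
        C * (eLpNorm f 2 (volume.restrict (Ioi (0 : ℝ)))).toReal *
          (eLpNorm g 2 (volume.restrict (Ioi (0 : ℝ)))).toReal := by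
  obtain ⟨C, h_kernel⟩ := exists_norm_besselI1d_mul_macdonaldK1d_le (m := m)
    (fun ⟨n, hn⟩ => hm n hn.symm) hk
  have hδ : -(1 / 2) < 1 / 2 + min m.re 0 := by linarith [lt_min hmre neg_one_lt_zero]
  obtain ⟨M, hM, h_schur⟩ := exists_setLIntegral_exp_neg_mul_abs_sub_mul_rpow_le hk hδ
  set w : ℝ → ℝ := fun x => min x 1 ^ (1 / 2 + min m.re 0)
  set K : ℝ → ℝ → ℝ := fun x y => Real.exp (-(k.re * |x - y|))
  have hw : Measurable w := by fun_prop
  have hK : Measurable (Function.uncurry K) := by fun_prop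
  refine ⟨_, ENNReal.toReal_nonneg, fun f g hf hg =>
    integral_integral_norm_mul_norm_kernel_mul_norm_le (C := ‖1 / k‖ * C) hK hw hw h_schur
      (fun y => ?_) hM hM ?_ hf hg⟩
  · simpa only [K, abs_sub_comm y] using h_schur y
  · filter_upwards [ae_restrict_mem measurableSet_Ioi] with x hx
    filter_upwards [ae_restrict_mem measurableSet_Ioi] with y hy
    rw [hG, mul_assoc, norm_mul, mul_assoc]
    exact mul_le_mul_of_nonneg_left (h_kernel x y hx hy) (norm_nonneg _)
end

section
/- For all β, m ∈ ℂ, the 1d Whittaker function u(r) := 𝓘_{β,m}(r) is twice differentiable on ]0,∞[ and satisfies the Whittaker equation −u''(r) + (m² − 1/4)·r^{−2}·u(r) − (β/r)·u(r) + (1/4)·u(r) = 0 for all r > 0. -/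
/-!
Differentiating a regularized hypergeometric series shifts all its parameters by one. For `₁𝐅₁` the
terms of the series then cancel degree by degree in Kummer's equation
`w F'' + (c - w) F' - a F = 0`. The prefactor `P z = z ^ (1/2 + m) e^{-z/2}` satisfies `P' = g P`
with `g z = (1/2 + m) / z - 1/2`, so `(P F)'' = P ((g² + g') F + 2 g F' + F'')`, and substituting
Kummer's equation for `F''` gives Whittaker's equation on the whole slit plane. Restricting a
holomorphic function to the real line commutes with differentiation.
-/

open Complex

/-- Olver-normalized confluent hypergeometric function
`₁𝐅₁(a; c; w) = ∑ (a)ₙ wⁿ/(n! Γ(c+n))`. -/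
noncomputable def oneF1reg (a c w : ℂ) : ℂ :=
  ∑' n : ℕ, (ascPochhammer ℂ n).eval a * w ^ n / ((n.factorial : ℂ) * Complex.Gamma (c + n))

/-- 1d Whittaker function `𝓘_{β,m}(z) = z^{1/2+m} e^{-z/2} ₁𝐅₁(1/2+m-β; 1+2m; z)`
(principal branch powers). -/
noncomputable def whittI (β m z : ℂ) : ℂ :=
  z ^ ((1 : ℂ) / 2 + m) * Complex.exp (-z / 2) * oneF1reg (1 / 2 + m - β) (1 + 2 * m) z

open scoped Topology

section Calculus

variable {𝕜 : Type*} [NontriviallyNormedField 𝕜]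

lemma hasSum_deriv_of_hasFPowerSeriesOnBall {E : Type*} [NormedAddCommGroup E] [NormedSpace 𝕜 E]
    [CompleteSpace E] {f : 𝕜 → E} {p : FormalMultilinearSeries 𝕜 𝕜 E} {x y : 𝕜} {r : ENNReal}
    (hf : HasFPowerSeriesOnBall f p x r) (hy : y ∈ Metric.eball 0 r) :
    HasSum (fun n : ℕ => y ^ n • (n + 1) • p.coeff (n + 1)) (deriv f (x + y)) := by
  have h := (ContinuousLinearMap.apply 𝕜 E (1 : 𝕜)).hasSum (hf.fderiv.hasSum hy)
  simpa [p.derivSeries.apply_eq_pow_smul_coeff, p.derivSeries_coeff_one] using h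

lemma hasDerivAt_deriv_mul_of_deriv_eq_mul {P g F F' : 𝕜 → 𝕜} {g' F'' z : 𝕜}
    (hP : ∀ᶠ w in 𝓝 z, HasDerivAt P (g w * P w) w) (hg : HasDerivAt g g' z)
    (hF : ∀ᶠ w in 𝓝 z, HasDerivAt F (F' w) w) (hF' : HasDerivAt F' F'' z) :
    HasDerivAt (deriv fun w => P w * F w)
      (P z * ((g z ^ 2 + g') * F z + 2 * g z * F' z + F'')) z := by
  have hderiv : (deriv fun w => P w * F w) =ᶠ[𝓝 z] fun w => P w * (g w * F w + F' w) := by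
    filter_upwards [hP, hF] with w hPw hFw
    rw [(hPw.fun_mul hFw).deriv]
    ring
  refine HasDerivAt.congr_of_eventuallyEq ?_ hderiv
  refine (hP.self_of_nhds.fun_mul ((hg.fun_mul hF.self_of_nhds).fun_add hF')).congr_deriv ?_
  ring

lemma hasDerivAt_deriv_comp_ofReal {f : ℂ → ℂ} {r : ℝ} (hf : AnalyticAt ℂ f r) :
    HasDerivAt (deriv fun x : ℝ => f x) (deriv (deriv f) r) r := by
  have hderiv : (deriv fun x : ℝ => f x) =ᶠ[𝓝 r] fun x : ℝ => deriv f x := by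
    filter_upwards [continuous_ofReal.continuousAt.eventually hf.eventually_analyticAt] with x hx
    exact hx.differentiableAt.hasDerivAt.comp_ofReal.deriv
  exact hf.deriv.differentiableAt.hasDerivAt.comp_ofReal.congr_of_eventuallyEq hderiv

end Calculus

section RegularizedHypergeometric

variable (a b : Multiset ℂ)

lemma add_one_mul_regularizedHGFunCoeff_add_one (n : ℕ) :
    (n + 1) * regularizedHGFunCoeff a b (n + 1) =
      a.prod * regularizedHGFunCoeff (a.map (· + 1)) (b.map (· + 1)) n := by
  have hpoch : (a.map (ascPochhammer ℂ (n + 1)).eval).prod =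
      a.prod * (a.map fun j => (ascPochhammer ℂ n).eval (j + 1)).prod := by
    simp [ascPochhammer_succ_left, Multiset.prod_map_mul]
  have hGamma : (fun j : ℂ => Gamma (j + (n + 1 : ℕ))) = fun j => Gamma (j + 1 + n) := by
    funext j
    push_cast
    ring_nf
  simp only [regularizedHGFunCoeff, Multiset.map_map, Function.comp_def, hpoch, hGamma,
    Nat.factorial_succ]
  push_cast
  field_simp [show (n : ℂ) + 1 ≠ 0 by exact_mod_cast n.succ_ne_zero]

lemma regularizedHGFun_eq_tsum (w : ℂ) :
    regularizedHGFun a b w = ∑' n, regularizedHGFunCoeff a b n * w ^ n :=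
  FormalMultilinearSeries.ofScalars_sum_eq (regularizedHGFunCoeff a b) w

lemma hasDerivAt_regularizedHGFun {w : ℂ}
    (hw : w ∈ Metric.eball 0 (regularizedHGFunSeries a b).radius) :
    HasDerivAt (regularizedHGFun a b)
      (a.prod * regularizedHGFun (a.map (· + 1)) (b.map (· + 1)) w) w := by
  have hf : HasFPowerSeriesOnBall (regularizedHGFun a b) (regularizedHGFunSeries a b) 0
      (regularizedHGFunSeries a b).radius :=
    (regularizedHGFunSeries a b).hasFPowerSeriesOnBall (pos_of_gt hw)
  have hderiv : deriv (regularizedHGFun a b) w =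
      a.prod * regularizedHGFun (a.map (· + 1)) (b.map (· + 1)) w := by
    have hsum := hasSum_deriv_of_hasFPowerSeriesOnBall hf hw
    rw [zero_add] at hsum
    rw [← hsum.tsum_eq, regularizedHGFun_eq_tsum, ← tsum_mul_left]
    refine tsum_congr fun n => ?_
    have hcoeff := add_one_mul_regularizedHGFunCoeff_add_one a b n
    simp only [regularizedHGFunSeries_coeff, smul_eq_mul, nsmul_eq_mul, Nat.cast_add, Nat.cast_one]
    linear_combination w ^ n * hcoeff
  have hdiff : DifferentiableAt ℂ (regularizedHGFun a b) w :=
    (hf.analyticAt_of_mem hw).differentiableAt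
  exact hderiv ▸ hdiff.hasDerivAt

end RegularizedHypergeometric

section Kummer

variable (a c w : ℂ)

lemma oneF1reg_eq_regularizedHGFun : oneF1reg a c = regularizedHGFun {a} {c} := by
  funext w
  rw [regularizedHGFun_eq_tsum]
  refine tsum_congr fun n => ?_
  simp only [regularizedHGFunCoeff, Multiset.map_singleton, Multiset.prod_singleton]
  ring

lemma mem_eball_radius_regularizedHGFunSeries_singleton :
    w ∈ Metric.eball 0 (regularizedHGFunSeries {a} {c}).radius := by
  simp [radius_regularizedHGFunSeries_eq_top]

lemma hasSum_oneF1reg :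
    HasSum (fun n => regularizedHGFunCoeff {a} {c} n * w ^ n) (oneF1reg a c w) := by
  have hsum := (regularizedHGFunSeries {a} {c}).hasSum
    (mem_eball_radius_regularizedHGFunSeries_singleton a c w)
  rw [oneF1reg_eq_regularizedHGFun]
  refine hsum.congr_fun fun n => ?_
  rw [FormalMultilinearSeries.apply_eq_pow_smul_coeff, regularizedHGFunSeries_coeff, smul_eq_mul,
    mul_comm]

lemma hasDerivAt_oneF1reg :
    HasDerivAt (oneF1reg a c) (a * oneF1reg (a + 1) (c + 1) w) w := by
  simpa only [oneF1reg_eq_regularizedHGFun, Multiset.prod_singleton, Multiset.map_singleton] using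
    hasDerivAt_regularizedHGFun {a} {c} (mem_eball_radius_regularizedHGFunSeries_singleton a c w)

lemma deriv_oneF1reg : deriv (oneF1reg a c) = fun w => a * oneF1reg (a + 1) (c + 1) w :=
  funext fun w => (hasDerivAt_oneF1reg a c w).deriv

lemma differentiable_oneF1reg : Differentiable ℂ (oneF1reg a c) :=
  fun w => (hasDerivAt_oneF1reg a c w).differentiableAt

lemma hasSum_mul_deriv_oneF1reg :
    HasSum (fun n : ℕ => n * regularizedHGFunCoeff {a} {c} n * w ^ n)
      (w * deriv (oneF1reg a c) w) := by
  rw [← hasSum_nat_add_iff' 1]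
  have hderiv : w * deriv (oneF1reg a c) w -
      ∑ n ∈ Finset.range 1, n * regularizedHGFunCoeff {a} {c} n * w ^ n =
        w * a * oneF1reg (a + 1) (c + 1) w := by
    simp [deriv_oneF1reg, mul_assoc]
  rw [hderiv]
  refine ((hasSum_oneF1reg (a + 1) (c + 1) w).mul_left (w * a)).congr_fun fun n => ?_
  have hcoeff := add_one_mul_regularizedHGFunCoeff_add_one {a} {c} n
  simp only [Multiset.prod_singleton, Multiset.map_singleton] at hcoeff
  push_cast
  linear_combination w ^ (n + 1) * hcoeff

lemma add_natCast_mul_regularizedHGFunCoeff_singleton (n : ℕ) :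
    (c + n) * (a * regularizedHGFunCoeff {a + 1} {c + 1} n) =
      (a + n) * regularizedHGFunCoeff {a} {c} n := by
  have hpoch : (a + n) * (ascPochhammer ℂ n).eval a = a * (ascPochhammer ℂ n).eval (a + 1) := by
    rw [mul_comm, ← ascPochhammer_succ_eval, ascPochhammer_succ_left]
    simp
  have hGamma := one_div_Gamma_eq_self_mul_one_div_Gamma_add_one (c + n)
  simp only [regularizedHGFunCoeff, Multiset.map_singleton, Multiset.prod_singleton,
    div_eq_mul_inv, mul_inv, add_right_comm c 1] at hGamma ⊢
  rw [hGamma]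
  linear_combination -((n.factorial : ℂ)⁻¹ * (c + n) * (Gamma (c + n + 1))⁻¹) * hpoch

theorem oneF1reg_satisfies_kummer_equation :
    w * deriv (deriv (oneF1reg a c)) w + (c - w) * deriv (oneF1reg a c) w - a * oneF1reg a c w =
      0 := by
  have hwF'' : HasSum (fun n : ℕ => a * (n * regularizedHGFunCoeff {a + 1} {c + 1} n * w ^ n))
      (w * deriv (deriv (oneF1reg a c)) w) := by
    rw [deriv_oneF1reg a c, deriv_const_mul_field, mul_left_comm]
    exact (hasSum_mul_deriv_oneF1reg (a + 1) (c + 1) w).mul_left a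
  have hcF' : HasSum (fun n => c * (a * (regularizedHGFunCoeff {a + 1} {c + 1} n * w ^ n)))
      (c * deriv (oneF1reg a c) w) := by
    rw [deriv_oneF1reg]
    exact ((hasSum_oneF1reg (a + 1) (c + 1) w).mul_left a).mul_left c
  have hwF' := hasSum_mul_deriv_oneF1reg a c w
  have haF := (hasSum_oneF1reg a c w).mul_left a
  have hsum := ((hwF''.add hcF').sub hwF').sub haF
  have hzero : HasSum (fun _ : ℕ => (0 : ℂ))
      (w * deriv (deriv (oneF1reg a c)) w + c * deriv (oneF1reg a c) w -
        w * deriv (oneF1reg a c) w - a * oneF1reg a c w) := by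
    refine hsum.congr_fun fun n => ?_
    linear_combination -w ^ n * add_natCast_mul_regularizedHGFunCoeff_singleton a c n
  linear_combination hzero.unique hasSum_zero

end Kummer

section Whittaker

lemma hasDerivAt_cpow_mul_exp_neg_div_two (s : ℂ) {z : ℂ} (hz : z ∈ slitPlane) :
    HasDerivAt (fun w : ℂ => w ^ s * exp (-w / 2))
      ((s / z - 1 / 2) * (z ^ s * exp (-z / 2))) z := by
  have hz0 : z ≠ 0 := slitPlane_ne_zero hz
  have hpow : HasDerivAt (fun w : ℂ => w ^ s) (s / z * z ^ s) z := by
    refine ((hasDerivAt_id' z).cpow_const hz).congr_deriv ?_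
    rw [cpow_sub _ _ hz0, cpow_one]
    ring
  have hexp : HasDerivAt (fun w : ℂ => exp (-w / 2)) (exp (-z / 2) * (-1 / 2)) z :=
    ((hasDerivAt_neg z).div_const 2).cexp
  refine (hpow.fun_mul hexp).congr_deriv ?_
  ring

variable (β m : ℂ) {z : ℂ}

lemma analyticAt_whittI (hz : z ∈ slitPlane) : AnalyticAt ℂ (whittI β m) z := by
  rw [analyticAt_iff_eventually_differentiableAt]
  filter_upwards [isOpen_slitPlane.mem_nhds hz] with w hw
  exact (hasDerivAt_cpow_mul_exp_neg_div_two _ hw).differentiableAt.mul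
    (differentiable_oneF1reg _ _ w)

lemma deriv_deriv_whittI (hz : z ∈ slitPlane) :
    deriv (deriv (whittI β m)) z =
      ((m ^ 2 - 1 / 4) / z ^ 2 - β / z + 1 / 4) * whittI β m z := by
  have hz0 : z ≠ 0 := slitPlane_ne_zero hz
  set F := oneF1reg (1 / 2 + m - β) (1 + 2 * m)
  have hP : ∀ᶠ w in 𝓝 z, HasDerivAt (fun w : ℂ => w ^ ((1 : ℂ) / 2 + m) * exp (-w / 2))
      (((1 / 2 + m) / w - 1 / 2) * (w ^ ((1 : ℂ) / 2 + m) * exp (-w / 2))) w := by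
    filter_upwards [isOpen_slitPlane.mem_nhds hz] with w hw
    exact hasDerivAt_cpow_mul_exp_neg_div_two _ hw
  have hg : HasDerivAt (fun w : ℂ => (1 / 2 + m) / w - 1 / 2) (-(1 / 2 + m) / z ^ 2) z := by
    refine (((hasDerivAt_inv hz0).const_mul (1 / 2 + m)).sub_const (1 / 2)).congr_deriv ?_
    ring
  have hF : ∀ w, HasDerivAt F (deriv F w) w := fun w =>
    (differentiable_oneF1reg _ _ w).hasDerivAt
  have hF' : HasDerivAt (deriv F) (deriv (deriv F) z) z :=
    ((differentiable_oneF1reg _ _).analyticAt z).deriv.differentiableAt.hasDerivAt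
  have hkummer : deriv (deriv F) z =
      ((1 / 2 + m - β) * F z - (1 + 2 * m - z) * deriv F z) / z := by
    rw [eq_div_iff hz0]
    linear_combination oneF1reg_satisfies_kummer_equation (1 / 2 + m - β) (1 + 2 * m) z
  have hu'' := hasDerivAt_deriv_mul_of_deriv_eq_mul hP hg (.of_forall hF) hF'
  calc deriv (deriv (whittI β m)) z = _ := hu''.deriv
    _ = ((m ^ 2 - 1 / 4) / z ^ 2 - β / z + 1 / 4) *
        (z ^ ((1 : ℂ) / 2 + m) * exp (-z / 2) * F z) := by
      rw [hkummer]
      field_simp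
      ring

theorem whittI_satisfies_whittaker_equation_general (hz : z ∈ slitPlane) :
    AnalyticAt ℂ (whittI β m) z ∧
      -deriv (deriv (whittI β m)) z + (m ^ 2 - 1 / 4) / z ^ 2 * whittI β m z -
          β / z * whittI β m z + 1 / 4 * whittI β m z = 0 := by
  refine ⟨analyticAt_whittI β m hz, ?_⟩
  rw [deriv_deriv_whittI β m hz]
  ring

end Whittaker

/-- for all `β, m ∈ ℂ`, `u(r) = 𝓘_{β,m}(r)` is twice differentiable on
`]0,∞[` and satisfies the Whittaker equation
`-u'' + (m²-1/4) r⁻² u - (β/r) u + (1/4) u = 0`. -/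
theorem whittI_satisfies_whittaker_equation (β m : ℂ) :
    ∀ r : ℝ, 0 < r →
      (DifferentiableAt ℝ (fun r : ℝ => whittI β m r) r ∧
        DifferentiableAt ℝ (deriv fun r : ℝ => whittI β m r) r) ∧
      -deriv (deriv fun r : ℝ => whittI β m r) r +
          (m ^ 2 - 1 / 4) / (r : ℂ) ^ 2 * whittI β m r -
          β / (r : ℂ) * whittI β m r + 1 / 4 * whittI β m r = 0 := by
  intro r hr
  obtain ⟨hu, hode⟩ :=
    whittI_satisfies_whittaker_equation_general β m (ofReal_mem_slitPlane.mpr hr)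
  have hu'' := hasDerivAt_deriv_comp_ofReal hu
  rw [hu''.deriv]
  exact ⟨⟨hu.differentiableAt.hasDerivAt.comp_ofReal.differentiableAt, hu''.differentiableAt⟩, hode⟩
end

section
/- Bound states of the Schrödinger operator with Morse potential: let n ∈ ℕ₀, let k ∈ ℂ with Re(k) > 0, let β ∈ ℂ, and set m := β/(2k) − n − 1/2; assume Re(m) > 0. Then the function u(x) := I_{β/(2k), m}(2k·e^x) on ℝ satisfies: (i) −u''(x) + k²e^{2x}·u(x) − β·e^x·u(x) = −m²·u(x) for all x ∈ ℝ; (ii) ∫_ℝ |u(x)|² dx < ∞. Hence −m² belongs to the point spectrum of the operator M_{β,k} = −∂_x² + k²e^{2x} − βe^x. -/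
open Complex MeasureTheory

/-- 2d Whittaker function `I_{β,m}(z) = √(2/(πz)) 𝓘_{β,m}(z)` (principal branch). -/
noncomputable def whittI2d (β m z : ℂ) : ℂ :=
  (2 / ((Real.pi : ℂ) * z)) ^ ((1 : ℂ) / 2) * whittI β m z

/-!
In the variable `z = 2k eˣ` the Morse equation with `β = 2k (m + ν + 1/2)` becomes Kummer's equation
with parameters `(-ν, 1 + 2m)` for `P` once one writes `u = e^{mx} e^{-z/2} P(z)`. When `ν = n` is a
natural number the hypergeometric series terminates, so `P` is a polynomial, and `u` is a linear
combination of the functions `e^{(m + j) x - k eˣ}`. Each of these decays exponentially as `x → -∞`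
and doubly exponentially as `x → ∞`, so it is square integrable.
-/

open Polynomial

section Kummer

/-- The coefficient of `wʲ` in the Olver-normalized series `oneF1reg a c w`. -/
noncomputable def oneF1regCoeff (a c : ℂ) (j : ℕ) : ℂ :=
  (ascPochhammer ℂ j).eval a / ((j.factorial : ℂ) * Complex.Gamma (c + j))

/-- The polynomial to which the series `oneF1reg (-n) c` reduces, `n` being a natural number. -/
noncomputable def kummerPoly (n : ℕ) (c : ℂ) : ℂ[X] :=
  ∑ j ∈ Finset.range (n + 1), monomial j (oneF1regCoeff (-n) c j)

-- At a pole `Γ s = 0` gives `(Γ s)⁻¹ = 0`, so `(Γ s)⁻¹ = s * (Γ (s + 1))⁻¹` holds for every `s`.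
theorem succ_mul_oneF1regCoeff_succ (a c : ℂ) (j : ℕ) :
    (j + 1) * (c + j) * oneF1regCoeff a c (j + 1) = (a + j) * oneF1regCoeff a c j := by
  have hGamma : (Gamma (c + j))⁻¹ = (c + j) * (Gamma (c + (j + 1 : ℕ)))⁻¹ := by
    rw [one_div_Gamma_eq_self_mul_one_div_Gamma_add_one, Nat.cast_succ, add_assoc]
  have hj : (j + 1 : ℂ) ≠ 0 := Nat.cast_add_one_ne_zero j
  simp only [oneF1regCoeff, div_eq_mul_inv, mul_inv, hGamma, ascPochhammer_succ_eval,
    Nat.factorial_succ, Nat.cast_mul, Nat.cast_succ]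
  field_simp

theorem oneF1regCoeff_neg_natCast_of_lt {n j : ℕ} (h : n < j) (c : ℂ) :
    oneF1regCoeff (-n) c j = 0 := by
  rw [oneF1regCoeff, ascPochhammer_eval_neg_coe_nat_of_lt h, zero_div]

@[simp]
theorem coeff_kummerPoly (n : ℕ) (c : ℂ) (j : ℕ) :
    (kummerPoly n c).coeff j = oneF1regCoeff (-n) c j := by
  simp only [kummerPoly, finsetSum_coeff, coeff_monomial, Finset.sum_ite_eq', Finset.mem_range,
    Order.lt_add_one_iff, ite_eq_left_iff, not_le]
  exact fun h => (oneF1regCoeff_neg_natCast_of_lt h c).symm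

theorem oneF1reg_neg_natCast (n : ℕ) (c w : ℂ) :
    oneF1reg (-n) c w = (kummerPoly n c).eval w := by
  have hterm (j : ℕ) : (ascPochhammer ℂ j).eval (-n : ℂ) * w ^ j /
      (j.factorial * Complex.Gamma (c + j)) = oneF1regCoeff (-n) c j * w ^ j :=
    mul_div_right_comm ..
  simp only [oneF1reg, hterm, kummerPoly, eval_finsetSum, eval_monomial]
  refine tsum_eq_sum fun j hj => ?_
  rw [oneF1regCoeff_neg_natCast_of_lt (by simpa using hj), zero_mul]

theorem kummerPoly_kummer_equation (n : ℕ) (c : ℂ) :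
    X * derivative (derivative (kummerPoly n c)) + (C c - X) * derivative (kummerPoly n c)
      + C (n : ℂ) * kummerPoly n c = 0 := by
  ext j
  have hrec := succ_mul_oneF1regCoeff_succ (-n) c j
  cases j with
  | zero =>
    simp only [sub_mul, coeff_add, coeff_sub, mul_coeff_zero, coeff_X_zero, coeff_C_zero,
      coeff_derivative, coeff_kummerPoly, coeff_zero, Nat.cast_zero, zero_add] at hrec ⊢
    linear_combination hrec
  | succ j =>
    simp only [sub_mul, coeff_add, coeff_sub, coeff_X_mul, coeff_C_mul, coeff_derivative,
      coeff_kummerPoly, coeff_zero, Nat.cast_succ] at hrec ⊢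
    linear_combination hrec

end Kummer

section MorseProfile

/-- The function `x ↦ e^{mx} e^{-z/2} P(z)` with `z = 2k eˣ`: an exponential ansatz for solutions of
the Morse equation, in which `P` is left free. -/
noncomputable def morseProfile (k m : ℂ) (P : ℂ[X]) (x : ℝ) : ℂ :=
  Complex.exp (m * x - k * Complex.exp x) * P.eval (2 * k * Complex.exp x)

/-- The action of `d/dx` on the polynomial factor of `morseProfile k m P`, that is
`P ↦ (m - z/2) P + z P'`; it does not depend on `k`. -/
noncomputable def morseProfileDerivative (m : ℂ) (P : ℂ[X]) : ℂ[X] :=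
  (C m - C (1 / 2) * X) * P + X * derivative P

variable (k m : ℂ) (P : ℂ[X])

theorem hasDerivAt_morseProfile (x : ℝ) :
    HasDerivAt (morseProfile k m P) (morseProfile k m (morseProfileDerivative m P) x) x := by
  have hid : HasDerivAt (fun z : ℂ => z) 1 x := hasDerivAt_id _
  have hexp := Complex.hasDerivAt_exp x
  have hpoly := (P.hasDerivAt (2 * k * Complex.exp x)).comp (x : ℂ) (hexp.const_mul (2 * k))
  refine (((hid.const_mul m).sub (hexp.const_mul k)).cexp.mul hpoly).comp_ofReal.congr_deriv ?_
  simp only [Pi.sub_apply, Function.comp_apply, morseProfile, morseProfileDerivative, eval_add,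
    eval_mul, eval_sub, eval_C, eval_X]
  ring

theorem deriv_morseProfile :
    deriv (morseProfile k m P) = morseProfile k m (morseProfileDerivative m P) :=
  funext fun x => (hasDerivAt_morseProfile k m P x).deriv

variable {m P} in
theorem morseProfile_morse_equation {ν : ℂ}
    (hP : X * derivative (derivative P) + (C (1 + 2 * m) - X) * derivative P + C ν * P = 0)
    (x : ℝ) :
    -deriv (deriv (morseProfile k m P)) x + k ^ 2 * Complex.exp x ^ 2 * morseProfile k m P x
      - 2 * k * (m + ν + 1 / 2) * Complex.exp x * morseProfile k m P x
      = -m ^ 2 * morseProfile k m P x := by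
  have hP_eval := congrArg (eval (2 * k * Complex.exp x)) hP
  simp only [deriv_morseProfile, morseProfile, morseProfileDerivative, derivative_add,
    derivative_mul, derivative_sub, derivative_C, derivative_X, eval_add, eval_mul, eval_sub,
    eval_C, eval_X, eval_zero, eval_one] at hP_eval ⊢
  linear_combination
    -Complex.exp (m * x - k * Complex.exp x) * (2 * k * Complex.exp x) * hP_eval

theorem morseProfile_add (Q : ℂ[X]) :
    morseProfile k m (P + Q) = morseProfile k m P + morseProfile k m Q := by
  ext x
  simp [morseProfile, mul_add]

theorem morseProfile_monomial (j : ℕ) (a : ℂ) :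
    morseProfile k m (monomial j a) =
      fun x : ℝ => a * (2 * k) ^ j * Complex.exp ((m + j) * x - k * Complex.exp x) := by
  ext x
  rw [morseProfile, eval_monomial, mul_pow, ← Complex.exp_nat_mul, add_mul, add_sub_right_comm,
    Complex.exp_add]
  ring

end MorseProfile

section Integrability

variable {s r : ℝ}

-- The substitution `t = eˣ` turns the integral into the Gamma integral `∫ t ^ (s - 1) * e^{-r t}`.
theorem integrable_exp_mul_sub_mul_exp (hs : 0 < s) (hr : 0 < r) :
    Integrable fun x : ℝ => Real.exp (s * x - r * Real.exp x) := by
  have hGamma : IntegrableOn (fun t : ℝ => t ^ (s - 1) * Real.exp (-r * t ^ (1 : ℝ)))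
      (Real.exp '' Set.univ) := by
    rw [Set.image_univ, Real.range_exp]
    exact integrableOn_rpow_mul_exp_neg_mul_rpow (by linarith) one_pos hr
  rw [integrableOn_image_iff_integrableOn_abs_deriv_smul MeasurableSet.univ
    (fun x _ => (Real.hasDerivAt_exp x).hasDerivWithinAt) Real.exp_injective.injOn,
    integrableOn_univ] at hGamma
  refine hGamma.congr (.of_forall fun x => ?_)
  simp only [smul_eq_mul, Real.rpow_one, Real.abs_exp, ← Real.exp_mul, ← Real.exp_add]
  ring_nf

variable {k m : ℂ} {p : ENNReal}

theorem memLp_cexp_mul_sub_mul_cexp (hk : 0 < k.re) (hm : 0 < m.re) (hp : p ≠ ⊤) :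
    MemLp (fun x : ℝ => Complex.exp (m * x - k * Complex.exp x)) p := by
  have hmeas : AEStronglyMeasurable (fun x : ℝ => Complex.exp (m * x - k * Complex.exp x)) :=
    Continuous.aestronglyMeasurable (by fun_prop)
  rcases eq_or_ne p 0 with rfl | hp0
  · exact memLp_zero_iff_aestronglyMeasurable.2 hmeas
  have hq : 0 < p.toReal := ENNReal.toReal_pos hp0 hp
  rw [← integrable_norm_rpow_iff hmeas hp0 hp]
  refine (integrable_exp_mul_sub_mul_exp (mul_pos hm hq) (mul_pos hk hq)).congr
    (.of_forall fun x => ?_)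
  simp only [Complex.norm_exp, ← Real.exp_mul, ← Complex.ofReal_exp, Complex.sub_re,
    Complex.re_mul_ofReal]
  ring_nf

theorem memLp_morseProfile (hk : 0 < k.re) (hm : 0 < m.re) (hp : p ≠ ⊤) (P : ℂ[X]) :
    MemLp (morseProfile k m P) p := by
  induction P using Polynomial.induction_on' with
  | add P Q hP hQ => exact morseProfile_add k m P Q ▸ hP.add hQ
  | monomial j a =>
    have hmj : 0 < (m + j).re := by
      rw [Complex.add_re, Complex.natCast_re]
      positivity
    rw [morseProfile_monomial]
    exact (memLp_cexp_mul_sub_mul_cexp hk hmj hp).const_mul _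

end Integrability

section Whittaker

theorem exp_ofReal_mul_cpow (x : ℝ) (z s : ℂ) :
    (Complex.exp x * z) ^ s = Complex.exp (x * s) * z ^ s := by
  rcases eq_or_ne z 0 with rfl | hz
  · rcases eq_or_ne s 0 with rfl | hs <;> simp [*]
  · rw [cpow_def_of_ne_zero (mul_ne_zero (exp_ne_zero _) hz), cpow_def_of_ne_zero hz,
      ← ofReal_exp, log_ofReal_mul (Real.exp_pos x) hz, Real.log_exp, ← exp_add, add_mul]

theorem whittI2d_exp_mul (β m z : ℂ) (x : ℝ) :
    whittI2d β m (Complex.exp x * z) =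
      (2 / (Real.pi * z)) ^ (1 / 2 : ℂ) * z ^ (1 / 2 + m) *
        (Complex.exp (m * x - z / 2 * Complex.exp x) *
          oneF1reg (1 / 2 + m - β) (1 + 2 * m) (Complex.exp x * z)) := by
  have hinv : 2 / (Real.pi * (Complex.exp x * z)) =
      Complex.exp (-x : ℝ) * (2 / (Real.pi * z)) := by
    rw [ofReal_neg, exp_neg]
    ring
  have hexp : Complex.exp (m * x - z / 2 * Complex.exp x) =
      Complex.exp ((-x : ℝ) * (1 / 2)) * Complex.exp (x * (1 / 2 + m)) *
        Complex.exp (-(Complex.exp x * z) / 2) := by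
    rw [← exp_add, ← exp_add]
    push_cast
    ring_nf
  rw [whittI2d, whittI, hinv, exp_ofReal_mul_cpow, exp_ofReal_mul_cpow, hexp]
  ring

theorem exists_whittI2d_eq_morseProfile (n : ℕ) (k m : ℂ) :
    ∃ A : ℂ, ∀ x : ℝ, whittI2d (m + n + 1 / 2) m (2 * k * Real.exp x) =
      morseProfile k m (C A * kummerPoly n (1 + 2 * m)) x := by
  refine ⟨(2 / (Real.pi * (2 * k))) ^ (1 / 2 : ℂ) * (2 * k) ^ (1 / 2 + m), fun x => ?_⟩
  have ha : 1 / 2 + m - (m + n + 1 / 2) = -n := by ring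
  rw [ofReal_exp, mul_comm (2 * k), whittI2d_exp_mul, ha, oneF1reg_neg_natCast, morseProfile,
    eval_C_mul, mul_div_cancel_left₀ k two_ne_zero, mul_comm (2 * k)]
  ring

end Whittaker

/-- bound states of the Schrödinger operator with Morse potential: for
`n ∈ ℕ₀`, `Re k > 0`, `β ∈ ℂ`, `m = β/(2k) - n - 1/2` with `Re m > 0`, the function
`u(x) = I_{β/(2k), m}(2k e^x)` solves `-u'' + k²e^{2x}u - βe^x u = -m²u` on `ℝ` and is
square integrable; hence `-m²` is in the point spectrum of `M_{β,k}`. -/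
theorem morse_bound_state (n : ℕ) (k : ℂ) (hk : 0 < k.re) (β : ℂ) (m : ℂ)
    (hm : m = β / (2 * k) - (n : ℂ) - 1 / 2) (hmre : 0 < m.re)
    (u : ℝ → ℂ) (hu : ∀ x : ℝ, u x = whittI2d (β / (2 * k)) m (2 * k * Real.exp x)) :
    (∀ x : ℝ,
      -deriv (deriv u) x + k ^ 2 * (Real.exp (2 * x) : ℂ) * u x -
          β * (Real.exp x : ℂ) * u x = -m ^ 2 * u x) ∧
    Integrable (fun x : ℝ => ‖u x‖ ^ 2) := by
  have hk0 : k ≠ 0 := fun h => by simp [h] at hk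
  have h_index : β / (2 * k) = m + n + 1 / 2 := by rw [hm]; ring
  have hβ : β = 2 * k * (m + n + 1 / 2) := by rw [← h_index]; field_simp
  obtain ⟨A, hA⟩ := exists_whittI2d_eq_morseProfile n k m
  obtain rfl : u = morseProfile k m (C A * kummerPoly n (1 + 2 * m)) :=
    funext fun x => by rw [hu, h_index, hA]
  refine ⟨fun x => ?_, (memLp_morseProfile hk hmre ENNReal.ofNat_ne_top _).integrable_norm_pow
    two_ne_zero⟩
  have hexp : (Real.exp (2 * x) : ℂ) = Complex.exp x ^ 2 := by
    rw [← Complex.exp_nat_mul]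
    push_cast
    rfl
  rw [hexp, hβ, ofReal_exp]
  refine morseProfile_morse_equation k ?_ x
  simp only [derivative_C_mul]
  linear_combination C A * kummerPoly_kummer_equation n (1 + 2 * m)
end
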